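/- arXiv:1312.6023 — 3 statements merged into one kernel-verified Lean document; each statement's English description precedes it below -/
import Mathlib

section
/- Let n ≥ 3 and let S = M_{a,b} + M_{c,d} be a spectrally bounded elementary operator of length 2 on the matrix algebra A = M_n(ℂ). Then (Sx)³ = 0 for every x ∈ A, and S* S = 0, where S* = M_{b,a} + M_{d,c}. -/
open scoped ENNReal NNReal

/-- A map between complex algebras is spectrally bounded if `r(Tx) ≤ M·r(x)`
for some constant `M ≥ 0` and all `x`. -/
def SpectrallyBounded {A B : Type*} [Ring A] [Algebra ℂ A] [Ring B] [Algebra ℂ B]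
    (T : A → B) : Prop :=
  ∃ M : ℝ≥0, ∀ x : A, spectralRadius ℂ (T x) ≤ (M : ℝ≥0∞) * spectralRadius ℂ x

/-!
For a flag `(v, y)`, i.e. `y ⬝ᵥ v = 0`, the matrix `v yᵀ` squares to zero, so its image under
`S = M_{a,b} + M_{c,d}` is nilpotent.  This image is `[av cv] · [yᵀb; yᵀd]`, hence the 2 × 2 matrix
`[yᵀb; yᵀd] · [av cv]` with entries `yᵀbav, yᵀbcv, yᵀdav, yᵀdcv` is nilpotent too.  Linear spaces of
nilpotent 2 × 2 matrices are at most one-dimensional, so for fixed `v`, and for fixed `y`, the four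
entries are proportional.  In dimension at least three flags with `yᵀbcv ≠ 0` are connected well
enough for the ratio to be global: if `bc` is not a scalar, then `dc - t bc` is a scalar for some
`t`.  Replacing `a, d` by `a + t c, d - t b` does not change `S` and makes `ba`, `dc`, `da` scalars.
A nonzero scalar among these would reduce the length of `S`, so all three products vanish.
-/

section Nilpotent

theorem spectralRadius_eq_zero_of_isNilpotent {𝕜 A : Type*} [NormedField 𝕜] [Ring A] [Algebra 𝕜 A]
    {x : A} (hx : IsNilpotent x) : spectralRadius 𝕜 x = 0 := by
  nontriviality A
  obtain ⟨k, hk⟩ := hx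
  have hpow : spectralRadius 𝕜 x ^ k ≤ 0 := by
    simpa only [hk, spectrum.spectralRadius_zero] using spectrum.spectralRadius_pow_le' x k
  exact eq_zero_of_pow_eq_zero (le_zero_iff.mp hpow)

theorem isNilpotent_of_spectralRadius_eq_zero {𝕜 ι : Type*} [NormedField 𝕜] [IsAlgClosed 𝕜]
    [Fintype ι] [DecidableEq ι] {x : Matrix ι ι 𝕜} (hx : spectralRadius 𝕜 x = 0) :
    IsNilpotent x := by
  have roots_zero : ∀ μ ∈ x.charpoly.roots, μ = 0 := by
    intro μ hμ
    have hle : (‖μ‖₊ : ℝ≥0∞) ≤ spectralRadius 𝕜 x :=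
      le_iSup₂_of_le μ (Matrix.mem_spectrum_iff_isRoot_charpoly.mpr
        (Polynomial.isRoot_of_mem_roots hμ)) le_rfl
    simpa [hx] using hle
  have charpoly_eq : x.charpoly = Polynomial.X ^ x.charpoly.roots.card := by
    conv_lhs => rw [(IsAlgClosed.splits x.charpoly).eq_prod_roots_of_monic x.charpoly_monic,
      Multiset.eq_replicate_card.mpr roots_zero]
    simp
  refine ⟨x.charpoly.roots.card, ?_⟩
  have cayley_hamilton := x.aeval_self_charpoly
  rwa [charpoly_eq, map_pow, Polynomial.aeval_X] at cayley_hamilton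

/-- `T` sends square-zero elements to nilpotents.  Spectral boundedness enters the proof only
through this consequence, which makes sense over every field. -/
def MapsSqZeroToNilpotent {A B : Type*} [Ring A] [Ring B] (T : A → B) : Prop :=
  ∀ x : A, x ^ 2 = 0 → IsNilpotent (T x)

theorem SpectrallyBounded.mapsSqZeroToNilpotent {A ι : Type*} [Ring A] [Algebra ℂ A]
    [Fintype ι] [DecidableEq ι] {T : A → Matrix ι ι ℂ} (hT : SpectrallyBounded T) :
    MapsSqZeroToNilpotent T := by
  obtain ⟨M, hM⟩ := hT
  intro x hx
  apply isNilpotent_of_spectralRadius_eq_zero (𝕜 := ℂ)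
  simpa [spectralRadius_eq_zero_of_isNilpotent ⟨2, hx⟩] using hM x

theorem isNilpotent_matrix_mul_swap {R m n : Type*} [Semiring R] [Fintype m] [Fintype n]
    [DecidableEq m] [DecidableEq n] {A : Matrix m n R} {B : Matrix n m R}
    (h : IsNilpotent (A * B)) : IsNilpotent (B * A) := by
  obtain ⟨k, hk⟩ := h
  have swap : ∀ j : ℕ, (B * A) ^ j * B = B * (A * B) ^ j := by
    intro j
    induction j with
    | zero => simp
    | succ j ih =>
      rw [pow_succ', Matrix.mul_assoc, ih, ← Matrix.mul_assoc, Matrix.mul_assoc B, Matrix.mul_assoc,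
        ← pow_succ']
  exact ⟨k + 1, by rw [pow_succ, ← Matrix.mul_assoc, swap, hk, Matrix.mul_zero, Matrix.zero_mul]⟩

theorem apply_one_one_eq_neg_of_isNilpotent {R : Type*} [CommRing R] [IsReduced R]
    {M : Matrix (Fin 2) (Fin 2) R} (hM : IsNilpotent M) : M 1 1 = -M 0 0 := by
  have htrace := (Matrix.isNilpotent_trace_of_isNilpotent hM).eq_zero
  rw [Matrix.trace_fin_two] at htrace
  linear_combination htrace

theorem det_eq_zero_of_isNilpotent {R ι : Type*} [CommRing R] [IsReduced R] [Fintype ι]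
    [DecidableEq ι] [Nonempty ι] {M : Matrix ι ι R} (hM : IsNilpotent M) : M.det = 0 := by
  obtain ⟨k, hk⟩ := hM
  apply eq_zero_of_pow_eq_zero (n := k + 1)
  rw [← Matrix.det_pow, pow_succ, hk, zero_mul, Matrix.det_zero]

/-- A linear space of nilpotent `2 × 2` matrices has dimension at most one. -/
theorem mul_apply_eq_mul_apply_of_isNilpotent_add {R : Type*} [CommRing R] [IsReduced R]
    {M N : Matrix (Fin 2) (Fin 2) R} (hM : IsNilpotent M) (hN : IsNilpotent N)
    (hMN : IsNilpotent (M + N)) (i j k l : Fin 2) : M i j * N k l = N i j * M k l := by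
  have detM := det_eq_zero_of_isNilpotent hM
  have detN := det_eq_zero_of_isNilpotent hN
  have detMN := det_eq_zero_of_isNilpotent hMN
  have trM := apply_one_one_eq_neg_of_isNilpotent hM
  have trN := apply_one_one_eq_neg_of_isNilpotent hN
  simp only [Matrix.det_fin_two, Matrix.add_apply, trM, trN] at detM detN detMN
  have polar : 2 * M 0 0 * N 0 0 + M 0 1 * N 1 0 + N 0 1 * M 1 0 = 0 := by
    linear_combination detM + detN - detMN
  have minor₁ : (M 0 0 * N 0 1 - N 0 0 * M 0 1) ^ 2 = 0 := by
    linear_combination - N 0 1 ^ 2 * detM - M 0 1 ^ 2 * detN - M 0 1 * N 0 1 * polar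
  have minor₂ : (M 0 0 * N 1 0 - N 0 0 * M 1 0) ^ 2 = 0 := by
    linear_combination - N 1 0 ^ 2 * detM - M 1 0 ^ 2 * detN - M 1 0 * N 1 0 * polar
  have minor₃ : (M 0 1 * N 1 0 - N 0 1 * M 1 0) ^ 2 = 0 := by
    linear_combination (M 0 1 * N 1 0 + N 0 1 * M 1 0 - 2 * M 0 0 * N 0 0) * polar
      - 4 * M 0 0 ^ 2 * detN + 4 * N 0 1 * N 1 0 * detM
  replace minor₁ := eq_zero_of_pow_eq_zero minor₁
  replace minor₂ := eq_zero_of_pow_eq_zero minor₂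
  replace minor₃ := eq_zero_of_pow_eq_zero minor₃
  fin_cases i <;> fin_cases j <;> fin_cases k <;> fin_cases l <;> simp [trM, trN] <;> grind

end Nilpotent

section LinearAlgebra

theorem exists_forall_mem_apply_eq_smul {K V : Type*} [Field K] [Nontrivial Kˣ] [AddCommGroup V]
    [Module K V] {W : Submodule K V} {f : V →ₗ[K] V} {φ : V →ₗ[K] K} {w₀ : V} (hw₀ : w₀ ∈ W)
    (hφw₀ : φ w₀ ≠ 0) (hf : ∀ w ∈ W, φ w ≠ 0 → f w ∈ K ∙ w) :
    ∃ α : K, ∀ w ∈ W, f w = α • w := by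
  simp only [Submodule.mem_span_singleton] at hf
  obtain ⟨α, hα⟩ := hf w₀ hw₀ hφw₀
  obtain ⟨c, hc⟩ := exists_ne (1 : Kˣ)
  have hker : ∀ w ∈ W, φ w = 0 → f w = α • w := by
    intro w hw hφw
    obtain rfl | hw_ne := eq_or_ne w 0
    · simp
    obtain ⟨β, hβ⟩ := hf (w₀ + w) (W.add_mem hw₀ hw) (by simpa [hφw] using hφw₀)
    obtain ⟨γ, hγ⟩ := hf (w₀ + (c : K) • w) (W.add_mem hw₀ (W.smul_mem _ hw))
      (by simpa [hφw] using hφw₀)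
    rw [map_add, ← hα] at hβ
    rw [map_add, map_smul, ← hα] at hγ
    have elim : (c * β - γ - (c - 1) * α) • w₀ + (c * (β - γ)) • w = 0 := by
      linear_combination (norm := module) (c : K) • hβ - hγ
    have coeff₁ : (c : K) * β - γ - (c - 1) * α = 0 := by
      simpa [hφw, hφw₀] using congrArg φ elim
    have coeff₂ : β - γ = 0 := by simpa [coeff₁, hw_ne] using elim
    have hβα : β = α := by
      have : ((c : K) - 1) * (β - α) = 0 := by linear_combination coeff₁ - coeff₂
      simpa [sub_eq_zero, hc] using this
    rw [hβα, smul_add] at hβ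
    exact (add_left_cancel hβ).symm
  refine ⟨α, fun w hw => ?_⟩
  set τ := φ w / φ w₀ with hτ
  have := hker (w - τ • w₀) (W.sub_mem hw (W.smul_mem _ hw₀)) (by simp [hτ, hφw₀])
  rw [map_sub, map_smul, ← hα, sub_eq_iff_eq_add] at this
  rw [this]; module

end LinearAlgebra

section Flags

open Matrix

variable {K ι : Type*} [Field K] [Fintype ι]

theorem mem_span_singleton_of_forall_dotProduct_eq_zero {x z : ι → K}
    (h : ∀ y, y ⬝ᵥ x = 0 → y ⬝ᵥ z = 0) : z ∈ K ∙ x := by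
  classical
  rw [Submodule.mem_span_singleton]
  obtain rfl | hx := eq_or_ne x 0
  · exact ⟨0, by simpa [eq_comm] using dotProduct_eq_zero z (by simpa [dotProduct_comm] using h)⟩
  obtain ⟨i, hi⟩ := Function.ne_iff.mp hx
  refine ⟨z i / x i, funext fun j => ?_⟩
  have hij := h (Pi.single j (x i) - Pi.single i (x j)) (by simp [sub_dotProduct, mul_comm])
  simp only [sub_dotProduct, single_dotProduct] at hij
  simp only [Pi.zero_apply] at hi
  simp only [Pi.smul_apply, smul_eq_mul]
  field_simp
  linear_combination -hij

theorem mem_bot_of_forall_dotProduct_mulVec_eq_zero [DecidableEq ι] {T : Matrix ι ι K}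
    (h : ∀ x y, y ⬝ᵥ x = 0 → y ⬝ᵥ T *ᵥ x = 0) : T ∈ (⊥ : Subalgebra K (Matrix ι ι K)) := by
  obtain ⟨k, hk⟩ := LinearMap.exists_eq_smul_id_of_forall_notLinearIndependent (f := T.toLin')
    fun x hx => by
      obtain ⟨k, hk⟩ := Submodule.mem_span_singleton.mp
        (mem_span_singleton_of_forall_dotProduct_eq_zero (h x))
      simpa using LinearIndependent.pair_iff.mp hx k (-1) (by simp [hk])
  refine Algebra.mem_bot.mpr ⟨k, ?_⟩
  rw [Algebra.algebraMap_eq_smul_one]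
  apply Matrix.toLin'.injective
  simpa [Module.End.one_eq_id] using hk.symm

theorem dotProduct_mulVec_eq_zero_of_mem_bot [DecidableEq ι] {T : Matrix ι ι K}
    (hT : T ∈ (⊥ : Subalgebra K (Matrix ι ι K))) {x y : ι → K} (hxy : y ⬝ᵥ x = 0) :
    y ⬝ᵥ T *ᵥ x = 0 := by
  obtain ⟨k, rfl⟩ := Algebra.mem_bot.mp hT
  simp [Algebra.algebraMap_eq_smul_one, smul_mulVec, hxy]

theorem exists_ne_zero_dotProduct_eq_zero_and (hι : 3 ≤ Fintype.card ι) (x x' : ι → K) :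
    ∃ y ≠ 0, x ⬝ᵥ y = 0 ∧ x' ⬝ᵥ y = 0 := by
  have hker : LinearMap.ker (Matrix.of ![x, x']).mulVecLin ≠ ⊥ :=
    LinearMap.ker_ne_bot_of_finrank_lt (by simpa using Nat.lt_of_succ_le hι)
  obtain ⟨y, hy, hy_ne⟩ := Submodule.exists_mem_ne_zero_of_ne_bot hker
  have hxy : Matrix.of ![x, x'] *ᵥ y = 0 := hy
  exact ⟨y, hy_ne, congrFun hxy 0, congrFun hxy 1⟩

/-- The forms of `q` and `T` are proportional along flags: the functionals `y ↦ y ⬝ᵥ q *ᵥ x` and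
`y ↦ y ⬝ᵥ T *ᵥ x` on `xᗮ` are linearly dependent for each `x`, and dually for each `y`. -/
structure FlagProportional (q T : Matrix ι ι K) : Prop where
  left : ∀ ⦃x y y' : ι → K⦄, y ⬝ᵥ x = 0 → y' ⬝ᵥ x = 0 →
    (y ⬝ᵥ q *ᵥ x) * (y' ⬝ᵥ T *ᵥ x) = (y' ⬝ᵥ q *ᵥ x) * (y ⬝ᵥ T *ᵥ x)
  right : ∀ ⦃x x' y : ι → K⦄, y ⬝ᵥ x = 0 → y ⬝ᵥ x' = 0 →
    (y ⬝ᵥ q *ᵥ x) * (y ⬝ᵥ T *ᵥ x') = (y ⬝ᵥ q *ᵥ x') * (y ⬝ᵥ T *ᵥ x)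

namespace FlagProportional

variable {q T : Matrix ι ι K}

theorem sub_smul (h : FlagProportional q T) (t : K) : FlagProportional q (T - t • q) where
  left x y y' hy hy' := by
    simp only [sub_mulVec, smul_mulVec, dotProduct_sub, dotProduct_smul, smul_eq_mul]
    linear_combination h.left hy hy'
  right x x' y hx hx' := by
    simp only [sub_mulVec, smul_mulVec, dotProduct_sub, dotProduct_smul, smul_eq_mul]
    linear_combination h.right hx hx'

variable [Nontrivial Kˣ] {x v : ι → K}

theorem exists_forall_vecMul_eq_smul (h : FlagProportional q T) (hvx : v ⬝ᵥ x = 0)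
    (hq : v ⬝ᵥ q *ᵥ x ≠ 0) (hT : v ⬝ᵥ T *ᵥ x = 0) :
    ∃ α : K, ∀ y, y ⬝ᵥ x = 0 → y ᵥ* T = α • y := by
  let W : Submodule K (ι → K) := LinearMap.ker (dotProductBilin K K |>.flip x)
  let φ : (ι → K) →ₗ[K] K := dotProductBilin K K |>.flip (q *ᵥ x)
  refine exists_forall_mem_apply_eq_smul (W := W) (f := T.vecMulLinear) (φ := φ) (w₀ := v) hvx hq
    fun y (hyx : y ⬝ᵥ x = 0) (hqy : y ⬝ᵥ q *ᵥ x ≠ 0) => ?_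
  have hTy : y ⬝ᵥ T *ᵥ x = 0 := by simpa [hT, hq] using h.left hvx hyx
  refine mem_span_singleton_of_forall_dotProduct_eq_zero fun x' hx' => ?_
  rw [dotProduct_comm] at hx'
  have hTx' : y ⬝ᵥ T *ᵥ x' = 0 := by simpa [hTy, hqy] using h.right hyx hx'
  rwa [dotProduct_comm, vecMulLinear_apply, ← dotProduct_mulVec]

variable [DecidableEq ι]

theorem mem_bot (hι : 3 ≤ Fintype.card ι) (h : FlagProportional q T) (hvx : v ⬝ᵥ x = 0)
    (hq : v ⬝ᵥ q *ᵥ x ≠ 0) (hT : v ⬝ᵥ T *ᵥ x = 0) : T ∈ (⊥ : Subalgebra K (Matrix ι ι K)) := by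
  obtain ⟨w, hw, hvw, hqw⟩ := exists_ne_zero_dotProduct_eq_zero_and hι v (v ᵥ* q)
  rw [← dotProduct_mulVec] at hqw
  have hTw : v ⬝ᵥ T *ᵥ w = 0 := by simpa [hT, hq, hqw] using h.right hvx hvw
  obtain ⟨α, hα⟩ := h.exists_forall_vecMul_eq_smul hvx hq hT
  obtain ⟨β, hβ⟩ := h.exists_forall_vecMul_eq_smul (x := x + w) (v := v)
    (by rw [dotProduct_add, hvx, hvw, add_zero])
    (by rwa [mulVec_add, dotProduct_add, hqw, add_zero])
    (by rw [mulVec_add, dotProduct_add, hT, hTw, add_zero])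
  obtain rfl : α = β := by
    obtain ⟨y, hy, hxy, hxwy⟩ := exists_ne_zero_dotProduct_eq_zero_and hι x (x + w)
    rw [dotProduct_comm] at hxy hxwy
    exact smul_left_injective K hy ((hα y hxy).symm.trans (hβ y hxwy))
  -- The image of `T - α` lies in both `K ∙ x` and `K ∙ (x + w)`, which meet only in `0`.
  have image_eq_zero : ∀ z, T *ᵥ z - α • z = 0 := by
    intro z
    have orthogonal : ∀ y, y ᵥ* T = α • y → y ⬝ᵥ (T *ᵥ z - α • z) = 0 := by
      intro y hy
      rw [dotProduct_sub, dotProduct_mulVec, hy, smul_dotProduct, dotProduct_smul, sub_self]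
    obtain ⟨k, hk⟩ := Submodule.mem_span_singleton.mp <|
      mem_span_singleton_of_forall_dotProduct_eq_zero fun y hy => orthogonal y (hα y hy)
    obtain ⟨l, hl⟩ := Submodule.mem_span_singleton.mp <|
      mem_span_singleton_of_forall_dotProduct_eq_zero fun y hy => orthogonal y (hβ y hy)
    have hkl : k = l := by
      have := congrArg (fun p => v ⬝ᵥ q *ᵥ p) (hk.trans hl.symm)
      simpa [mulVec_smul, mulVec_add, hqw, hq] using this
    have hkw : k • w = 0 := by
      rw [hkl] at hk ⊢
      linear_combination (norm := module) hl - hk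
    rw [← hk, (smul_eq_zero.mp hkw).resolve_right hw, zero_smul]
  refine Algebra.mem_bot.mpr ⟨α, ext_of_mulVec_single fun i => ?_⟩
  rw [Algebra.algebraMap_eq_smul_one, smul_mulVec, one_mulVec]
  exact (sub_eq_zero.mp (image_eq_zero _)).symm

theorem exists_sub_smul_mem_bot (hι : 3 ≤ Fintype.card ι) (h : FlagProportional q T)
    (hq : q ∉ (⊥ : Subalgebra K (Matrix ι ι K))) :
    ∃ t : K, T - t • q ∈ (⊥ : Subalgebra K (Matrix ι ι K)) := by
  obtain ⟨x, v, hvx, hqvx⟩ : ∃ x v, v ⬝ᵥ x = 0 ∧ v ⬝ᵥ q *ᵥ x ≠ 0 := by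
    contrapose! hq
    exact mem_bot_of_forall_dotProduct_mulVec_eq_zero hq
  refine ⟨(v ⬝ᵥ T *ᵥ x) / (v ⬝ᵥ q *ᵥ x), (h.sub_smul _).mem_bot hι hvx hqvx ?_⟩
  rw [sub_mulVec, dotProduct_sub, smul_mulVec, dotProduct_smul, smul_eq_mul,
    div_mul_cancel₀ _ hqvx, sub_self]

end FlagProportional
end Flags

section ElementaryOperator

theorem isUnit_and_isUnit_of_mul_mem_bot {K A : Type*} [Field K] [Ring A] [Algebra K A]
    [IsDedekindFiniteMonoid A] {x y : A} (h : x * y ∈ (⊥ : Subalgebra K A)) (hne : x * y ≠ 0) :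
    IsUnit x ∧ IsUnit y := by
  obtain ⟨k, hk⟩ := Algebra.mem_bot.mp h
  have hk_ne : k ≠ 0 := by
    rintro rfl
    exact hne (by rw [← hk, map_zero])
  rw [← IsUnit.mul_iff, ← hk]
  exact hk_ne.isUnit.map (algebraMap K A)

theorem mul_eq_zero_of_mul_mem_bot {K A : Type*} [Field K] [Ring A] [Algebra K A]
    [IsDedekindFiniteMonoid A] {a b c d : A}
    (hlen : ∀ u v : A, ∃ x, a * x * b + c * x * d ≠ u * x * v)
    (hba : b * a ∈ (⊥ : Subalgebra K A)) (hdc : d * c ∈ (⊥ : Subalgebra K A))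
    (hda : d * a ∈ (⊥ : Subalgebra K A)) : b * a = 0 ∧ d * c = 0 ∧ d * a = 0 := by
  have da_eq_zero : d * a = 0 := by
    by_contra hne
    obtain ⟨hd, -⟩ := isUnit_and_isUnit_of_mul_mem_bot hda hne
    obtain ⟨ρ, hρ⟩ := Algebra.mem_bot.mp hda
    obtain ⟨σ, hσ⟩ := Algebra.mem_bot.mp hdc
    have hρ_ne : ρ ≠ 0 := by
      rintro rfl
      exact hne (by rw [← hρ, map_zero])
    have c_eq : c = (σ / ρ) • a := by
      apply hd.mul_left_cancel
      rw [mul_smul_comm, ← hρ, ← hσ, Algebra.smul_def, ← map_mul, div_mul_cancel₀ _ hρ_ne]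
    obtain ⟨x, hx⟩ := hlen a (b + (σ / ρ) • d)
    exact hx (by simp [c_eq, mul_add])
  refine ⟨?_, ?_, da_eq_zero⟩
  · by_contra hne
    obtain ⟨-, ha⟩ := isUnit_and_isUnit_of_mul_mem_bot hba hne
    obtain ⟨x, hx⟩ := hlen a b
    exact hx (by simp [ha.mul_left_eq_zero.mp da_eq_zero])
  · by_contra hne
    obtain ⟨hd, -⟩ := isUnit_and_isUnit_of_mul_mem_bot hdc hne
    obtain ⟨x, hx⟩ := hlen c d
    exact hx (by simp [hd.mul_right_eq_zero.mp da_eq_zero])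

theorem pow_three_and_adjoint_eq_zero {A : Type*} [Semiring A] {a b c d : A} (hba : b * a = 0)
    (hdc : d * c = 0) (hda : d * a = 0) (x : A) :
    (a * x * b + c * x * d) ^ 3 = 0 ∧
      b * (a * x * b + c * x * d) * a + d * (a * x * b + c * x * d) * c = 0 := by
  have hba' (z : A) : b * (a * z) = 0 := by rw [← mul_assoc, hba, zero_mul]
  have hdc' (z : A) : d * (c * z) = 0 := by rw [← mul_assoc, hdc, zero_mul]
  have hda' (z : A) : d * (a * z) = 0 := by rw [← mul_assoc, hda, zero_mul]
  constructor
  · simp [pow_succ, mul_add, add_mul, mul_assoc, hba', hdc', hda']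
  · simp [mul_add, mul_assoc, hda, hba', hdc', hda']

variable {K ι : Type*} [Field K] [Fintype ι]

open Matrix

/-- For `x = v yᵀ` one has `axb + cxd = [av cv] · [yᵀb; yᵀd]`; this is the product of the same two
factors in the other order. -/
def compression (a b c d : Matrix ι ι K) (v y : ι → K) : Matrix (Fin 2) (Fin 2) K :=
  !![y ⬝ᵥ (b * a) *ᵥ v, y ⬝ᵥ (b * c) *ᵥ v; y ⬝ᵥ (d * a) *ᵥ v, y ⬝ᵥ (d * c) *ᵥ v]

variable {a b c d : Matrix ι ι K}

theorem compression_add_left (v v' y : ι → K) :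
    compression a b c d (v + v') y = compression a b c d v y + compression a b c d v' y := by
  ext i j
  fin_cases i <;> fin_cases j <;> simp [compression, mulVec_add]

theorem compression_add_right (v y y' : ι → K) :
    compression a b c d v (y + y') = compression a b c d v y + compression a b c d v y' := by
  ext i j
  fin_cases i <;> fin_cases j <;> simp [compression, add_dotProduct]

variable [DecidableEq ι]

theorem isNilpotent_compression (hS : MapsSqZeroToNilpotent fun x => a * x * b + c * x * d)
    {v y : ι → K} (hvy : y ⬝ᵥ v = 0) : IsNilpotent (compression a b c d v y) := by
  let U : Matrix ι (Fin 2) K := (Matrix.of ![a *ᵥ v, c *ᵥ v])ᵀ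
  let V : Matrix (Fin 2) ι K := Matrix.of ![y ᵥ* b, y ᵥ* d]
  have image_eq : a * vecMulVec v y * b + c * vecMulVec v y * d = U * V := by
    ext i j
    simp [U, V, mul_apply, Fin.sum_univ_two, mul_vecMulVec, vecMulVec_mul, vecMulVec_apply]
  have entry (p q : Matrix ι ι K) : y ⬝ᵥ (p * q) *ᵥ v = y ᵥ* p ⬝ᵥ q *ᵥ v := by
    rw [← dotProduct_mulVec, mulVec_mulVec]
  have compression_eq : compression a b c d v y = V * U := by
    ext i j
    fin_cases i <;> fin_cases j <;> exact entry _ _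
  rw [compression_eq]
  apply isNilpotent_matrix_mul_swap
  rw [← image_eq]
  exact hS _ (by rw [pow_two, vecMulVec_mul_vecMulVec, hvy]; simp)

theorem mul_apply_compression_left (hS : MapsSqZeroToNilpotent fun x => a * x * b + c * x * d)
    {v y y' : ι → K} (hy : y ⬝ᵥ v = 0) (hy' : y' ⬝ᵥ v = 0) (i j k l : Fin 2) :
    compression a b c d v y i j * compression a b c d v y' k l =
      compression a b c d v y' i j * compression a b c d v y k l := by
  refine mul_apply_eq_mul_apply_of_isNilpotent_add (isNilpotent_compression hS hy)
    (isNilpotent_compression hS hy') ?_ i j k l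
  rw [← compression_add_right]
  exact isNilpotent_compression hS (by rw [add_dotProduct, hy, hy', add_zero])

theorem mul_apply_compression_right (hS : MapsSqZeroToNilpotent fun x => a * x * b + c * x * d)
    {v v' y : ι → K} (hv : y ⬝ᵥ v = 0) (hv' : y ⬝ᵥ v' = 0) (i j k l : Fin 2) :
    compression a b c d v y i j * compression a b c d v' y k l =
      compression a b c d v' y i j * compression a b c d v y k l := by
  refine mul_apply_eq_mul_apply_of_isNilpotent_add (isNilpotent_compression hS hv)
    (isNilpotent_compression hS hv') ?_ i j k l
  rw [← compression_add_left]
  exact isNilpotent_compression hS (by rw [dotProduct_add, hv, hv', add_zero])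

theorem flagProportional_bc_dc (hS : MapsSqZeroToNilpotent fun x => a * x * b + c * x * d) :
    FlagProportional (b * c) (d * c) where
  left _ _ _ hy hy' := mul_apply_compression_left hS hy hy' 0 1 1 1
  right _ _ _ hv hv' := mul_apply_compression_right hS hv hv' 0 1 1 1

theorem flagProportional_bc_da (hS : MapsSqZeroToNilpotent fun x => a * x * b + c * x * d) :
    FlagProportional (b * c) (d * a) where
  left _ _ _ hy hy' := mul_apply_compression_left hS hy hy' 0 1 1 0
  right _ _ _ hv hv' := mul_apply_compression_right hS hv hv' 0 1 1 0

theorem ba_add_dc_mem_bot (hS : MapsSqZeroToNilpotent fun x => a * x * b + c * x * d) :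
    b * a + d * c ∈ (⊥ : Subalgebra K (Matrix ι ι K)) := by
  refine mem_bot_of_forall_dotProduct_mulVec_eq_zero fun v y hvy => ?_
  have trace_eq := apply_one_one_eq_neg_of_isNilpotent (isNilpotent_compression hS hvy)
  rw [add_mulVec, dotProduct_add, add_comm]
  exact eq_neg_iff_add_eq_zero.mp trace_eq

theorem dc_mem_bot_of_bc_mem_bot (hS : MapsSqZeroToNilpotent fun x => a * x * b + c * x * d)
    (hbc : b * c ∈ (⊥ : Subalgebra K (Matrix ι ι K))) :
    d * c ∈ (⊥ : Subalgebra K (Matrix ι ι K)) := by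
  refine mem_bot_of_forall_dotProduct_mulVec_eq_zero fun v y hvy => ?_
  have hnil := isNilpotent_compression hS hvy
  have trace_eq : y ⬝ᵥ (d * c) *ᵥ v = -(y ⬝ᵥ (b * a) *ᵥ v) :=
    apply_one_one_eq_neg_of_isNilpotent hnil
  have det_eq := det_eq_zero_of_isNilpotent hnil
  rw [compression, det_fin_two_of, dotProduct_mulVec_eq_zero_of_mem_bot hbc hvy] at det_eq
  apply eq_zero_of_pow_eq_zero (n := 2)
  linear_combination (y ⬝ᵥ (d * c) *ᵥ v) * trace_eq - det_eq

variable [Nontrivial Kˣ]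

theorem da_mem_bot_of_bc_notMem_bot (hι : 3 ≤ Fintype.card ι)
    (hS : MapsSqZeroToNilpotent fun x => a * x * b + c * x * d)
    (hdc : d * c ∈ (⊥ : Subalgebra K (Matrix ι ι K)))
    (hbc : b * c ∉ (⊥ : Subalgebra K (Matrix ι ι K))) :
    d * a ∈ (⊥ : Subalgebra K (Matrix ι ι K)) := by
  obtain ⟨v, y, hvy, hne⟩ : ∃ v y, y ⬝ᵥ v = 0 ∧ y ⬝ᵥ (b * c) *ᵥ v ≠ 0 := by
    contrapose! hbc
    exact mem_bot_of_forall_dotProduct_mulVec_eq_zero hbc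
  have da_entry : y ⬝ᵥ (d * a) *ᵥ v = 0 := by
    have det_eq := det_eq_zero_of_isNilpotent (isNilpotent_compression hS hvy)
    rw [compression, det_fin_two_of, dotProduct_mulVec_eq_zero_of_mem_bot hdc hvy] at det_eq
    simpa [hne] using det_eq
  exact (flagProportional_bc_da hS).mem_bot hι hvy hne da_entry

theorem exists_representation_ba_dc_da_mem_bot (hι : 3 ≤ Fintype.card ι)
    (hS : MapsSqZeroToNilpotent fun x => a * x * b + c * x * d) :
    ∃ a' b' c' d' : Matrix ι ι K,
      (∀ x, a * x * b + c * x * d = a' * x * b' + c' * x * d') ∧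
      (∀ x, b * x * a + d * x * c = b' * x * a' + d' * x * c') ∧
      b' * a' ∈ (⊥ : Subalgebra K (Matrix ι ι K)) ∧
      d' * c' ∈ (⊥ : Subalgebra K (Matrix ι ι K)) ∧
      d' * a' ∈ (⊥ : Subalgebra K (Matrix ι ι K)) := by
  by_cases hbc : b * c ∈ (⊥ : Subalgebra K (Matrix ι ι K))
  · have hdc := dc_mem_bot_of_bc_mem_bot hS hbc
    have hba := (add_mem_cancel_right hdc).mp (ba_add_dc_mem_bot hS)
    exact ⟨c, d, a, b, fun x => add_comm _ _, fun x => add_comm _ _, hdc, hba, hbc⟩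
  · obtain ⟨t, ht⟩ := (flagProportional_bc_dc hS).exists_sub_smul_mem_bot hι hbc
    have S_eq : ∀ x, a * x * b + c * x * d = (a + t • c) * x * b + c * x * (d - t • b) := by
      intro x
      simp only [add_mul, mul_sub, smul_mul_assoc, mul_smul_comm]
      abel
    have adjoint_eq : ∀ x, b * x * a + d * x * c =
        b * x * (a + t • c) + (d - t • b) * x * c := by
      intro x
      simp only [mul_add, sub_mul, smul_mul_assoc, mul_smul_comm]
      abel
    have hS' : MapsSqZeroToNilpotent fun x => (a + t • c) * x * b + c * x * (d - t • b) := by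
      simpa only [S_eq] using hS
    have hdc : (d - t • b) * c ∈ (⊥ : Subalgebra K (Matrix ι ι K)) := by
      rwa [sub_mul, smul_mul_assoc]
    exact ⟨a + t • c, b, c, d - t • b, S_eq, adjoint_eq,
      (add_mem_cancel_right hdc).mp (ba_add_dc_mem_bot hS'), hdc,
      da_mem_bot_of_bc_notMem_bot hι hS' hdc hbc⟩

end ElementaryOperator

theorem spectrally_bounded_length_two_matrix_algebra_general {K ι : Type*} [Field K]
    [Nontrivial Kˣ] [Fintype ι] [DecidableEq ι] {a b c d : Matrix ι ι K} (hι : 3 ≤ Fintype.card ι)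
    (hSlen : ∀ (m : ℕ) (u v : Fin m → Matrix ι ι K),
      (∀ x, a * x * b + c * x * d = ∑ i, u i * x * v i) → 2 ≤ m)
    (hS : MapsSqZeroToNilpotent fun x => a * x * b + c * x * d) :
    (∀ x, (a * x * b + c * x * d) ^ 3 = 0) ∧
      ∀ x, b * (a * x * b + c * x * d) * a + d * (a * x * b + c * x * d) * c = 0 := by
  obtain ⟨a', b', c', d', S_eq, adjoint_eq, hba, hdc, hda⟩ :=
    exists_representation_ba_dc_da_mem_bot hι hS
  have hlen : ∀ u v, ∃ x, a' * x * b' + c' * x * d' ≠ u * x * v := by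
    intro u v
    by_contra! h
    have := hSlen 1 (fun _ => u) (fun _ => v) (by simpa [S_eq] using h)
    lia
  obtain ⟨hba₀, hdc₀, hda₀⟩ := mul_eq_zero_of_mul_mem_bot hlen hba hdc hda
  simp only [S_eq, adjoint_eq]
  exact forall_and.mp (pow_three_and_adjoint_eq_zero hba₀ hdc₀ hda₀)

/-- **Corollary 3.10.** Let `n ≥ 3` and let `S = M_{a,b} + M_{c,d}` be a
spectrally bounded elementary operator of length `2` on `A = M_n(ℂ)`.  Then
`(Sx)³ = 0` for every `x ∈ A`, and `S* S = 0`, where `S* = M_{b,a} + M_{d,c}`. -/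
theorem spectrally_bounded_length_two_matrix_algebra
    {n : ℕ} (hn : 3 ≤ n) (a b c d : Matrix (Fin n) (Fin n) ℂ)
    (hSlen : ∀ (m : ℕ) (u v : Fin m → Matrix (Fin n) (Fin n) ℂ),
      (∀ x : Matrix (Fin n) (Fin n) ℂ, a * x * b + c * x * d = ∑ i, u i * x * v i) →
        2 ≤ m)
    (hS : SpectrallyBounded
      (fun x : Matrix (Fin n) (Fin n) ℂ => a * x * b + c * x * d)) :
    (∀ x : Matrix (Fin n) (Fin n) ℂ, (a * x * b + c * x * d) ^ 3 = 0) ∧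
    (∀ x : Matrix (Fin n) (Fin n) ℂ,
      b * (a * x * b + c * x * d) * a + d * (a * x * b + c * x * d) * c = 0) := by
  have : Nontrivial ℂˣ := ⟨1, -1, by simp [Units.ext_iff, eq_neg_iff_add_eq_zero]⟩
  exact spectrally_bounded_length_two_matrix_algebra_general (by simpa using hn) hSlen
    hS.mapsSqZeroToNilpotent
end

section
/- Let A be a unital complex Banach algebra and let S = Σ_{i=1}^3 M_{a_i,b_i} be an elementary operator on A of length 3 such that r(Sx) = 0 for every x ∈ A. Then S*(S(x)) ∈ rad(A) for every x ∈ A, and (Sx)⁵ ∈ rad(A) for every x ∈ A, where S* = Σ_{i=1}^3 M_{b_i,a_i}. -/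
open scoped ENNReal NNReal

/-- The Jacobson radical of a (possibly noncommutative) ring. -/
noncomputable def jacobsonRadical (A : Type*) [Ring A] : Ideal A :=
  Ideal.jacobson (⊥ : Ideal A)

/-!
If `I` is a maximal left ideal, the density theorem lets us replace `x` by an arbitrary linear
operator on `E = A ⧸ I`, and with operators of rank at most two the hypothesis says that every
compression of the operator matrix `(b i * a j)` by two functionals and two vectors is a nilpotent
matrix of scalars: an eigenvector for a nonzero eigenvalue would produce one of some `S x`.

The traces of the powers of these compressions therefore vanish, and polarization in the functionals
and vectors gives identities between the scalar matrices `m f p = (f (b i (a j p)))`. The quadratic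
identity `trace (m f p * m f' p') = 0` says that `S* (S x)` acts as zero on `E`.

For `3 × 3` matrices the identities up to degree four force the family `m` to be simultaneously
strictly triangularizable, or `m f p` to depend on `p` only through a scalar factor, or on `f` only
through a scalar factor. In the last two cases the square of the matrix `N = (x * b i * a j)`
factors as `N * N = N * C` or `N * N = C * N` with `C` a nilpotent scalar matrix. So `N ^ 4 = 0` in
all cases, and `(S x) ^ 5` is the row `a` times `N ^ 4` times the column `x * b`.
-/

open Matrix

section MatrixLemmas

variable {K R n o : Type*}

theorem pow_card_eq_zero_of_isNilpotent [CommRing R] [IsDomain R] [Fintype n] [DecidableEq n]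
    {M : Matrix n n R} (hM : IsNilpotent M) : M ^ Fintype.card n = 0 := by
  have hchar := sub_eq_zero.1 (Matrix.isNilpotent_charpoly_sub_pow_of_isNilpotent hM).eq_zero
  simpa [hchar] using Matrix.aeval_self_charpoly M

theorem trace_eq_zero_of_isNilpotent [CommRing R] [IsReduced R] [Fintype n] [DecidableEq n]
    {M : Matrix n n R} (hM : IsNilpotent M) : M.trace = 0 :=
  (isNilpotent_trace_of_isNilpotent hM).eq_zero

theorem isNilpotent_of_no_nonzero_eigenvalue [Field K] [IsAlgClosed K] [Fintype n] [DecidableEq n]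
    {M : Matrix n n K} (hM : ∀ l : K, l ≠ 0 → ∀ v : n → K, M *ᵥ v = l • v → v = 0) :
    IsNilpotent M := by
  have roots_eq_zero : ∀ l ∈ M.charpoly.roots, l = 0 := by
    intro l hl
    by_contra hne
    rw [Polynomial.mem_roots M.charpoly_monic.ne_zero, ← mem_spectrum_iff_isRoot_charpoly,
      ← spectrum_toLin', ← Module.End.hasEigenvalue_iff_mem_spectrum] at hl
    obtain ⟨v, hv⟩ := hl.exists_hasEigenvector
    exact hv.2 (hM l hne v hv.apply_eq_smul)
  have hchar := (IsAlgClosed.splits M.charpoly).eq_prod_roots_of_monic M.charpoly_monic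
  rw [Multiset.eq_replicate_of_mem roots_eq_zero] at hchar
  have hM' := M.aeval_self_charpoly
  rw [hchar] at hM'
  exact ⟨_, by simpa using hM'⟩

section Trace

theorem trace_fromBlocks [AddCommMonoid R] [Fintype n] [Fintype o] (A : Matrix n n R)
    (B : Matrix n o R) (C : Matrix o n R) (D : Matrix o o R) :
    (fromBlocks A B C D).trace = A.trace + D.trace := by
  simp [trace]

variable [CommRing R] [Fintype n] [Fintype o] [DecidableEq n] [DecidableEq o]
  (A : Matrix n n R) (B : Matrix n o R) (C : Matrix o n R) (D : Matrix o o R)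

theorem trace_fromBlocks_sq :
    (fromBlocks A B C D ^ 2).trace = (A ^ 2).trace + 2 * (B * C).trace + (D ^ 2).trace := by
  simp only [pow_two, fromBlocks_multiply, trace_fromBlocks, trace_add, trace_mul_comm C B]
  ring

theorem trace_fromBlocks_cube :
    (fromBlocks A B C D ^ 3).trace =
      (A ^ 3).trace + 3 * (A * B * C).trace + 3 * (B * D * C).trace + (D ^ 3).trace := by
  have h₁ := trace_mul_comm C (A * B)
  have h₂ := trace_mul_comm (C * A) B
  have h₃ := trace_mul_comm (B * D) C
  have h₄ := trace_mul_comm (D * C) B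
  simp only [pow_succ, pow_zero, one_mul, fromBlocks_multiply, trace_fromBlocks, trace_add,
    Matrix.add_mul, ← Matrix.mul_assoc] at *
  grind

theorem trace_fromBlocks_pow_four :
    (fromBlocks A B C D ^ 4).trace =
      (A ^ 4).trace + 4 * (A * A * B * C).trace + 4 * (A * B * D * C).trace +
        2 * (B * C * B * C).trace + 4 * (B * D * D * C).trace + (D ^ 4).trace := by
  have h₁ := trace_mul_comm C (A * A * B)
  have h₂ := trace_mul_comm (C * A) (A * B)
  have h₃ := trace_mul_comm (C * A * A) B
  have h₄ := trace_mul_comm C (A * B * D)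
  have h₅ := trace_mul_comm (C * A) (B * D)
  have h₆ := trace_mul_comm (C * A * B) D
  have h₇ := trace_mul_comm C (B * D * D)
  have h₈ := trace_mul_comm (C * B) (D * D)
  have h₉ := trace_mul_comm (C * B * D) D
  have h₁₀ := trace_mul_comm C (B * C * B)
  simp only [pow_succ, pow_zero, one_mul, fromBlocks_multiply, trace_fromBlocks, trace_add,
    Matrix.add_mul, ← Matrix.mul_assoc] at *
  grind

end Trace

theorem cubic_coeffs_eq_zero [Field K] [CharZero K] {c₀ c₁ c₂ c₃ : K}
    (h : ∀ t : K, c₀ + t * c₁ + t ^ 2 * c₂ + t ^ 3 * c₃ = 0) : c₁ = 0 ∧ c₂ = 0 := by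
  constructor
  · linear_combination (2 / 3) * (h 1 - h (-1)) - (1 / 12) * (h 2 - h (-2))
  · linear_combination (h 1 + h (-1)) / 2 - h 0

theorem trace_mul_self_mul_eq_zero [Field K] [CharZero K] [Fintype n] [DecidableEq n]
    {X Y : Matrix n n K} (h : ∀ t : K, ((X + t • Y) ^ 3).trace = 0) : (X * X * Y).trace = 0 := by
  have h₁ := trace_mul_comm X (X * Y)
  have h₂ := trace_mul_comm (X * X) Y
  have hcubic : ∀ t : K, (X ^ 3).trace + t * (3 * (X * X * Y).trace) +
      t ^ 2 * (Y * Y * X + Y * X * Y + X * Y * Y).trace + t ^ 3 * (Y ^ 3).trace = 0 := by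
    intro t
    rw [← h t]
    simp only [pow_succ, pow_zero, one_mul, add_mul, mul_add, smul_mul_assoc, mul_smul_comm,
      trace_add, trace_smul, smul_eq_mul, smul_add, ← mul_assoc] at *
    grind
  simpa using (cubic_coeffs_eq_zero hcubic).1

end MatrixLemmas

section BlockNilpotent

variable {K Q P n : Type*} [Field K] [AddCommGroup Q] [Module K Q] [AddCommGroup P] [Module K P]

/-- The family `p, f ↦ (m f p)ᵀ`, which exchanges the roles of functionals and vectors. -/
def transposeFamily (m : Q →ₗ[K] P →ₗ[K] Matrix n n K) : P →ₗ[K] Q →ₗ[K] Matrix n n K :=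
  (m.compr₂ (transposeLinearEquiv n n K K).toLinearMap).flip

theorem transposeFamily_apply (m : Q →ₗ[K] P →ₗ[K] Matrix n n K) (p : P) (f : Q) :
    transposeFamily m p f = (m f p)ᵀ := rfl

variable [Fintype n] [DecidableEq n]

/-- A bilinear family of square matrices `m f p` is *block nilpotent* if all the matrices
`[m f p, m f p'; m f' p, m f' p']` of twice the size are nilpotent. For `m f p = (f (N i j p))`
with an operator matrix `N`, these are the compressions of `N` by pairs of functionals and pairs
of vectors. -/
def IsBlockNilpotent (m : Q →ₗ[K] P →ₗ[K] Matrix n n K) : Prop :=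
  ∀ f f' p p', IsNilpotent (fromBlocks (m f p) (m f p') (m f' p) (m f' p'))

/-- The family `f, p ↦ u * m f p * u⁻¹`. -/
def conjugateFamily (m : Q →ₗ[K] P →ₗ[K] Matrix n n K) (u : GL n K) :
    Q →ₗ[K] P →ₗ[K] Matrix n n K :=
  m.compr₂ (LinearMap.mulRight K u⁻¹.val ∘ₗ LinearMap.mulLeft K u.val)

theorem conjugateFamily_apply (m : Q →ₗ[K] P →ₗ[K] Matrix n n K) (u : GL n K) (f : Q) (p : P) :
    conjugateFamily m u f p = u.val * m f p * u⁻¹.val := rfl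

theorem conjugateFamily_mul (m : Q →ₗ[K] P →ₗ[K] Matrix n n K) (u : GL n K) (f f' : Q)
    (p p' : P) :
    conjugateFamily m u f p * conjugateFamily m u f' p' =
      u.val * (m f p * m f' p') * u⁻¹.val := by
  simp only [conjugateFamily_apply, mul_assoc, Units.inv_mul_cancel_left]

theorem trace_conjugateFamily_mul_self_mul_mul_self (m : Q →ₗ[K] P →ₗ[K] Matrix n n K)
    (u : GL n K) (f f' : Q) (p p' : P) :
    (conjugateFamily m u f p * conjugateFamily m u f p *
      (conjugateFamily m u f' p' * conjugateFamily m u f' p')).trace =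
      (m f p * m f p * (m f' p' * m f' p')).trace := by
  simpa only [conjugateFamily_mul, mul_assoc, Units.inv_mul_cancel_left] using
    trace_units_conj u (m f p * m f p * (m f' p' * m f' p'))

namespace IsBlockNilpotent

variable {m : Q →ₗ[K] P →ₗ[K] Matrix n n K}

theorem conjugate (hm : IsBlockNilpotent m) (u : GL n K) :
    IsBlockNilpotent (conjugateFamily m u) := by
  intro f f' p p'
  let U : GL (n ⊕ n) K :=
    ⟨fromBlocks u 0 0 u, fromBlocks u⁻¹.val 0 0 u⁻¹.val, by simp [fromBlocks_multiply],
      by simp [fromBlocks_multiply]⟩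
  have hU : fromBlocks (conjugateFamily m u f p) (conjugateFamily m u f p')
      (conjugateFamily m u f' p) (conjugateFamily m u f' p') =
      U.val * fromBlocks (m f p) (m f p') (m f' p) (m f' p') * U⁻¹.val := by
    change _ = fromBlocks u.val 0 0 u.val * _ * fromBlocks u⁻¹.val 0 0 u⁻¹.val
    simp only [conjugateFamily_apply, fromBlocks_multiply, zero_mul, mul_zero, add_zero, zero_add]
  obtain ⟨k, hk⟩ := hm f f' p p'
  exact ⟨k, by rw [hU, Units.conj_pow, hk, mul_zero, zero_mul]⟩

theorem transpose (hm : IsBlockNilpotent m) : IsBlockNilpotent (transposeFamily m) := by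
  intro p p' f f'
  simpa only [fromBlocks_transpose, transposeFamily_apply] using
    isNilpotent_transpose_iff.2 (hm f f' p p')

theorem isNilpotent (hm : IsBlockNilpotent m) (f : Q) (p : P) : IsNilpotent (m f p) := by
  obtain ⟨k, hk⟩ := hm f 0 p 0
  refine ⟨k, ?_⟩
  simp only [map_zero, LinearMap.zero_apply, fromBlocks_diagonal_pow,
    ← fromBlocks_zero, fromBlocks_inj] at hk
  exact hk.1

theorem pow_card (hm : IsBlockNilpotent m) (f : Q) (p : P) : m f p ^ Fintype.card n = 0 :=
  pow_card_eq_zero_of_isNilpotent (hm.isNilpotent f p)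

theorem trace (hm : IsBlockNilpotent m) (f : Q) (p : P) : (m f p).trace = 0 :=
  trace_eq_zero_of_isNilpotent (hm.isNilpotent f p)

theorem trace_pow (hm : IsBlockNilpotent m) (f : Q) (p : P) {k : ℕ} (hk : k ≠ 0) :
    (m f p ^ k).trace = 0 :=
  trace_eq_zero_of_isNilpotent ((hm.isNilpotent f p).pow_of_pos hk)

theorem trace_fromBlocks_pow (hm : IsBlockNilpotent m) (f f' : Q) (p p' : P) {k : ℕ}
    (hk : k ≠ 0) :
    (fromBlocks (m f p) (m f p') (m f' p) (m f' p') ^ k).trace = 0 :=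
  trace_eq_zero_of_isNilpotent ((hm f f' p p').pow_of_pos hk)

variable [CharZero K]

theorem trace_mul (hm : IsBlockNilpotent m) (f f' : Q) (p p' : P) :
    (m f p * m f' p').trace = 0 := by
  have h := hm.trace_fromBlocks_pow f f' p' p two_ne_zero
  rw [trace_fromBlocks_sq, hm.trace_pow _ _ two_ne_zero, hm.trace_pow _ _ two_ne_zero] at h
  simpa using h

theorem trace_mul_self_mul_right (hm : IsBlockNilpotent m) (f : Q) (p p' : P) :
    (m f p * m f p * m f p').trace = 0 :=
  trace_mul_self_mul_eq_zero fun t => by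
    simpa using hm.trace_pow f (p + t • p') three_ne_zero

theorem trace_mul_self_mul_left (hm : IsBlockNilpotent m) (f f' : Q) (p : P) :
    (m f p * m f p * m f' p).trace = 0 :=
  trace_mul_self_mul_eq_zero fun t => by
    simpa using hm.trace_pow (f + t • f') p three_ne_zero

theorem trace_mul_mul (hm : IsBlockNilpotent m) (f f' : Q) (p p' : P) :
    (m f p * m f p' * m f' p).trace = 0 := by
  have hcubic : ∀ t : K, 0 + t * (3 * (m f p * m f p' * m f' p).trace) +
      t ^ 2 * (3 * (m f p' * m f' p' * m f' p).trace) + t ^ 3 * 0 = 0 := by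
    intro t
    have h := hm.trace_fromBlocks_pow f (t • f') p p' three_ne_zero
    rw [trace_fromBlocks_cube, hm.trace_pow _ _ three_ne_zero, hm.trace_pow _ _ three_ne_zero] at h
    simp only [map_smul, LinearMap.smul_apply, mul_smul_comm, smul_mul_assoc, trace_smul,
      smul_eq_mul] at h
    linear_combination h
  simpa using (cubic_coeffs_eq_zero hcubic).1

theorem trace_mul_mul_add (hm : IsBlockNilpotent m) (f f' : Q) (p p' : P) :
    (m f p * m f' p * m f p').trace + (m f p * m f p * m f' p').trace = 0 := by
  have hcubic : ∀ t : K, (m f p * m f p * m f p').trace +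
      t * ((m f p * m f' p * m f p').trace + (m f p * m f p * m f' p').trace) +
      t ^ 2 * (m f' p * m f' p * m f p' + m f p * m f' p * m f' p' +
        m f' p * m f p * m f' p').trace + t ^ 3 * (m f' p * m f' p * m f' p').trace = 0 := by
    intro t
    have h := hm.trace_mul_self_mul_right (f + t • f') p p'
    have hcycle : (m f' p * m f p * m f p').trace = 0 := by
      rw [mul_assoc, trace_mul_comm, hm.trace_mul_mul]
    simp only [map_add, map_smul, LinearMap.add_apply, LinearMap.smul_apply, add_mul, mul_add,
      smul_mul_assoc, mul_smul_comm, trace_add, trace_smul, smul_eq_mul, smul_add] at h ⊢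
    linear_combination h - t * hcycle
  exact (cubic_coeffs_eq_zero hcubic).1

theorem trace_quartic (hm : IsBlockNilpotent m) (f f' : Q) (p p' : P) :
    (m f p * m f p * m f p' * m f' p).trace = 0 ∧
      2 * (m f p * m f p' * m f' p' * m f' p).trace +
        (m f p' * m f' p * m f p' * m f' p).trace = 0 := by
  have hcubic : ∀ t : K, 0 + t * (4 * (m f p * m f p * m f p' * m f' p).trace) +
      t ^ 2 * (4 * (m f p * m f p' * m f' p' * m f' p).trace +
        2 * (m f p' * m f' p * m f p' * m f' p).trace) +
      t ^ 3 * (4 * (m f p' * m f' p' * m f' p' * m f' p).trace) = 0 := by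
    intro t
    have h := hm.trace_fromBlocks_pow f (t • f') p p' four_ne_zero
    rw [trace_fromBlocks_pow_four, hm.trace_pow _ _ four_ne_zero,
      hm.trace_pow _ _ four_ne_zero] at h
    simp only [map_smul, LinearMap.smul_apply, mul_smul_comm, smul_mul_assoc, trace_smul,
      smul_eq_mul] at h
    linear_combination h
  obtain ⟨h₁, h₂⟩ := cubic_coeffs_eq_zero hcubic
  exact ⟨by simpa using h₁, by linear_combination h₂ / 2⟩

end IsBlockNilpotent

end BlockNilpotent

section StrictUpperTriangular

variable {R n : Type*}

/-- A square matrix is *strictly upper triangular* if it vanishes on and below the diagonal. -/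
def IsStrictUpperTriangular [LE n] [Zero R] (M : Matrix n n R) : Prop :=
  ∀ i j, j ≤ i → M i j = 0

theorem IsStrictUpperTriangular.mul_mul_eq_zero [NonUnitalNonAssocSemiring R]
    {L M N : Matrix (Fin 3) (Fin 3) R} (hL : IsStrictUpperTriangular L)
    (hM : IsStrictUpperTriangular M) (hN : IsStrictUpperTriangular N) : L * M * N = 0 := by
  ext i j
  fin_cases i <;> fin_cases j <;>
    simp [mul_apply, Fin.sum_univ_three, hL _ _ le_rfl, hL 1 0, hL 2 0, hL 2 1, hM _ _ le_rfl,
      hM 1 0, hM 2 0, hM 2 1, hN _ _ le_rfl, hN 1 0, hN 2 0, hN 2 1]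

theorem isStrictUpperTriangular_of_pow_three_eq_zero [Semiring R] [NoZeroDivisors R]
    {M : Matrix (Fin 3) (Fin 3) R} (hM : M ^ 3 = 0) (h₁₀ : M 1 0 = 0) (h₂₀ : M 2 0 = 0)
    (h₂₁ : M 2 1 = 0) : IsStrictUpperTriangular M := by
  have hdiag : ∀ i, M i i = 0 := by
    intro i
    have h := congrFun (congrFun hM i) i
    fin_cases i <;>
      simpa [pow_succ, mul_apply, Fin.sum_univ_three, h₁₀, h₂₀, h₂₁] using h
  intro i j hij
  fin_cases i <;> fin_cases j <;> first | exact hdiag _ | assumption | simp at hij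

end StrictUpperTriangular

section NormalForms

variable {K n : Type*} [Field K] [Fintype n]

theorem exists_mulVec_ne_zero {M : Matrix n n K} (hM : M ≠ 0) : ∃ v, M *ᵥ v ≠ 0 := by
  by_contra! h
  exact hM (mulVec_injective (funext fun v => by simpa using h v))

theorem exists_conj_eq_of_mulVec_eq_sum [DecidableEq n] {M N : Matrix n n K} {c : n → n → K}
    (hc : LinearIndependent K c) (hM : ∀ j, M *ᵥ c j = ∑ i, N i j • c i) :
    ∃ u : GL n K, u.val * M * u⁻¹.val = N ∧ u⁻¹.val = (of c)ᵀ := by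
  obtain ⟨w, hw⟩ : IsUnit (of c)ᵀ := linearIndependent_cols_iff_isUnit.1 hc
  refine ⟨w⁻¹, ?_, by rw [inv_inv, hw]⟩
  have hcomm : M * w.val = w.val * N := by
    ext i j
    have h := congrFun (hM j) i
    simp only [Finset.sum_apply, Pi.smul_apply, smul_eq_mul] at h
    simpa [hw, mul_apply, mulVec, dotProduct, mul_comm] using h
  rw [inv_inv, mul_assoc, hcomm, Units.inv_mul_cancel_left]

/-- The nilpotent Jordan block of size three. -/
def shift (K : Type*) [Zero K] [One K] : Matrix (Fin 3) (Fin 3) K := !![0, 1, 0; 0, 0, 1; 0, 0, 0]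

theorem exists_conj_eq_shift {M : Matrix (Fin 3) (Fin 3) K} (hM : M ^ 3 = 0) {v : Fin 3 → K}
    (hv : (M * M) *ᵥ v ≠ 0) :
    ∃ u : GL (Fin 3) K, u.val * M * u⁻¹.val = shift K ∧ ∀ i, u⁻¹.val i 2 = v i := by
  rw [← mulVec_mulVec] at hv
  have hM3 : M *ᵥ M *ᵥ M *ᵥ v = 0 := by
    simp only [mulVec_mulVec, ← mul_assoc]
    rw [← pow_two, ← pow_succ, hM, zero_mulVec]
  have hli : LinearIndependent K ![M *ᵥ M *ᵥ v, M *ᵥ v, v] := by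
    rw [Fintype.linearIndependent_iff]
    intro x hx
    simp only [Fin.sum_univ_three, cons_val_zero, cons_val_one, cons_val] at hx
    have h₂ : x 2 = 0 := by
      have h := congrArg (fun w => M *ᵥ M *ᵥ w) hx
      simpa [-mulVec_mulVec, mulVec_add, mulVec_smul, hM3, hv] using h
    have h₁ : x 1 = 0 := by
      have h := congrArg (fun w => M *ᵥ w) hx
      simpa [-mulVec_mulVec, mulVec_add, mulVec_smul, hM3, hv, h₂] using h
    have h₀ : x 0 = 0 := by simpa [-mulVec_mulVec, hv, h₁, h₂] using hx
    intro i
    fin_cases i <;> assumption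
  obtain ⟨u, hu, hu'⟩ := exists_conj_eq_of_mulVec_eq_sum (M := M) (N := shift K) hli (by
    intro j
    fin_cases j <;> simp [-mulVec_mulVec, Fin.sum_univ_three, shift, hM3])
  exact ⟨u, hu, fun i => by simp [hu']⟩

theorem exists_mulVec_eq_zero_and_notMem_span {M : Matrix (Fin 3) (Fin 3) K} (hM : M * M = 0)
    (v : Fin 3 → K) : ∃ w, M *ᵥ w = 0 ∧ w ∉ K ∙ v := by
  have hrange : M.toLin'.range ≤ M.toLin'.ker := by
    rintro _ ⟨w, rfl⟩
    simp [mulVec_mulVec, hM]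
  have hrank := M.toLin'.finrank_range_add_finrank_ker
  have hle := Submodule.finrank_mono hrange
  have hspan : Module.finrank K (K ∙ v) ≤ 1 := by
    simpa using finrank_span_le_card (R := K) {v}
  have hlt : ¬M.toLin'.ker ≤ K ∙ v := by
    intro h
    have hker := Submodule.finrank_mono h
    rw [Module.finrank_fin_fun] at hrank
    omega
  obtain ⟨w, hw, hw'⟩ := SetLike.not_le_iff_exists.1 hlt
  exact ⟨w, by simpa using hw, hw'⟩

theorem exists_conj_eq_single {M : Matrix (Fin 3) (Fin 3) K} (hM : M * M = 0) (hM' : M ≠ 0) :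
    ∃ u : GL (Fin 3) K, u.val * M * u⁻¹.val = single 0 2 1 := by
  obtain ⟨v, hv⟩ := exists_mulVec_ne_zero hM'
  obtain ⟨w, hw, hwv⟩ := exists_mulVec_eq_zero_and_notMem_span hM (M *ᵥ v)
  have hM2 : M *ᵥ M *ᵥ v = 0 := by rw [mulVec_mulVec, hM, zero_mulVec]
  have hli : LinearIndependent K ![M *ᵥ v, w, v] := by
    rw [Fintype.linearIndependent_iff]
    intro x hx
    simp only [Fin.sum_univ_three, cons_val_zero, cons_val_one, cons_val] at hx
    have h₂ : x 2 = 0 := by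
      have h := congrArg (fun w => M *ᵥ w) hx
      simpa [mulVec_add, mulVec_smul, hM2, hw, hv] using h
    have h₁ : x 1 = 0 := by
      by_contra hne
      refine hwv (Submodule.mem_span_singleton.2 ⟨-((x 1)⁻¹ * x 0), ?_⟩)
      rw [h₂, zero_smul, add_zero, add_eq_zero_iff_eq_neg] at hx
      rw [neg_smul, mul_smul, hx, smul_neg, neg_neg, inv_smul_smul₀ hne]
    have h₀ : x 0 = 0 := by simpa [hv, h₁, h₂] using hx
    intro i
    fin_cases i <;> assumption
  obtain ⟨u, hu, -⟩ := exists_conj_eq_of_mulVec_eq_sum (M := M) (N := single 0 2 1) hli (by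
    intro j
    fin_cases j <;> simp [single, hM2, hw])
  exact ⟨u, hu⟩

end NormalForms

section SquareZero

variable {K Q P : Type*} [Field K] [AddCommGroup Q] [Module K Q] [AddCommGroup P] [Module K P]

theorem mul_add_mul_eq_zero {R : Type*} [NonUnitalNonAssocSemiring R] {x y : R}
    (hx : x * x = 0) (hy : y * y = 0) (hxy : (x + y) * (x + y) = 0) : x * y + y * x = 0 := by
  simpa [add_mul, mul_add, hx, hy, add_comm] using hxy

theorem isStrictUpperTriangular_of_single_mul_add_mul_single {M : Matrix (Fin 3) (Fin 3) K}
    (hM : M ^ 3 = 0) {c : K}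
    (h : single 0 2 1 * M + M * single 0 2 1 = c • single 0 2 1) : IsStrictUpperTriangular M := by
  have entry := fun i j => congrFun (congrFun h i) j
  exact isStrictUpperTriangular_of_pow_three_eq_zero hM
    (by simpa [mul_apply, single] using entry 1 2)
    (by simpa [mul_apply, single] using entry 0 0)
    (by simpa [mul_apply, single] using entry 0 1)

theorem IsStrictUpperTriangular.mul_eq_smul_single {M N : Matrix (Fin 3) (Fin 3) K}
    (hM : IsStrictUpperTriangular M) (hN : IsStrictUpperTriangular N) :
    M * N = (M * N) 0 2 • single 0 2 1 := by
  ext i j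
  fin_cases i <;> fin_cases j <;>
    simp [mul_apply, Fin.sum_univ_three, single, hM _ _ le_rfl, hM 1 0, hM 2 0, hM 2 1,
      hN _ _ le_rfl, hN 1 0, hN 2 0, hN 2 1]

theorem isStrictUpperTriangular_of_forall_mul_self_eq_zero
    {m : Q →ₗ[K] P →ₗ[K] Matrix (Fin 3) (Fin 3) K} (hm : ∀ f p, m f p * m f p = 0)
    {f₀ : Q} {p₀ : P} (h₀ : m f₀ p₀ = single 0 2 1) (f : Q) (p : P) :
    IsStrictUpperTriangular (m f p) := by
  have pow_three : ∀ f p, m f p ^ 3 = 0 := fun f p => by rw [pow_succ, pow_two, hm, zero_mul]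
  have polar_left : ∀ f f' p, m f p * m f' p + m f' p * m f p = 0 := fun f f' p =>
    mul_add_mul_eq_zero (hm f p) (hm f' p) (by simpa using hm (f + f') p)
  have polar_right : ∀ f p p', m f p * m f p' + m f p' * m f p = 0 := fun f p p' =>
    mul_add_mul_eq_zero (hm f p) (hm f p') (by simpa using hm f (p + p'))
  have polar : single 0 2 1 * m f p + m f p * single 0 2 1 +
      (m f p₀ * m f₀ p + m f₀ p * m f p₀) = 0 := by
    have h := polar_left f₀ f (p₀ + p)
    simp only [map_add, add_mul, mul_add] at h
    rw [← h₀]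
    linear_combination (norm := abel) h - polar_left f₀ f p₀ - polar_left f₀ f p
  have hleft : IsStrictUpperTriangular (m f p₀) :=
    isStrictUpperTriangular_of_single_mul_add_mul_single (c := 0) (pow_three f p₀)
      (by simpa [h₀] using polar_left f₀ f p₀)
  have hright : IsStrictUpperTriangular (m f₀ p) :=
    isStrictUpperTriangular_of_single_mul_add_mul_single (c := 0) (pow_three f₀ p)
      (by simpa [h₀] using polar_right f₀ p₀ p)
  rw [hleft.mul_eq_smul_single hright, hright.mul_eq_smul_single hleft, ← add_smul,
    add_eq_zero_iff_eq_neg, ← neg_smul] at polar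
  exact isStrictUpperTriangular_of_single_mul_add_mul_single (pow_three f p) polar

theorem exists_conj_isStrictUpperTriangular_of_forall_mul_self_eq_zero
    {m : Q →ₗ[K] P →ₗ[K] Matrix (Fin 3) (Fin 3) K} (hm : ∀ f p, m f p * m f p = 0) :
    ∃ u : GL (Fin 3) K, ∀ f p, IsStrictUpperTriangular (conjugateFamily m u f p) := by
  by_cases hzero : ∀ f p, m f p = 0
  · refine ⟨1, fun f p i j _ => ?_⟩
    rw [conjugateFamily_apply, hzero, mul_zero, zero_mul, Matrix.zero_apply]
  · push Not at hzero
    obtain ⟨f₀, p₀, hne⟩ := hzero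
    obtain ⟨u, hu⟩ := exists_conj_eq_single (hm f₀ p₀) hne
    refine ⟨u, isStrictUpperTriangular_of_forall_mul_self_eq_zero (fun f p => ?_) hu⟩
    rw [conjugateFamily_mul, hm, mul_zero, zero_mul]

end SquareZero

section ShiftTraces

variable {R : Type*} [CommRing R] (M : Matrix (Fin 3) (Fin 3) R)

theorem trace_shift_mul : (shift R * M).trace = M 1 0 + M 2 1 := by
  simp [shift, trace_fin_three, Fin.sum_univ_three, vecMul, dotProduct]

theorem trace_shift_mul_shift_mul : (shift R * shift R * M).trace = M 2 0 := by
  simp [shift, trace_fin_three, Fin.sum_univ_three, vecMul, dotProduct]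

theorem trace_shift_mul_mul_shift_mul :
    (shift R * M * shift R * M).trace = M 1 0 ^ 2 + 2 * M 1 1 * M 2 0 + M 2 1 ^ 2 := by
  simp only [shift, trace_fin_three, mul_apply, Fin.sum_univ_three, of_apply, cons_val_zero,
    cons_val_one, cons_val, zero_mul, one_mul, zero_add, add_zero, mul_zero, mul_one]
  ring

theorem isStrictUpperTriangular_shift : IsStrictUpperTriangular (shift R) := by
  intro i j hij
  fin_cases i <;> fin_cases j <;> first | rfl | simp at hij

variable {M}

theorem isStrictUpperTriangular_of_trace_shift_mul [NoZeroDivisors R] (hM : M ^ 3 = 0)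
    (h₁ : (shift R * M).trace = 0) (h₂ : (shift R * shift R * M).trace = 0)
    (h₃ : (shift R * shift R * (M * M)).trace = 0) : IsStrictUpperTriangular M := by
  rw [trace_shift_mul] at h₁
  rw [trace_shift_mul_shift_mul] at h₂ h₃
  have hprod : M 2 1 * M 1 0 = 0 := by simpa [mul_apply, Fin.sum_univ_three, h₂] using h₃
  rcases mul_eq_zero.1 hprod with h | h
  · exact isStrictUpperTriangular_of_pow_three_eq_zero hM (by simpa [h] using h₁) h₂ h
  · exact isStrictUpperTriangular_of_pow_three_eq_zero hM h h₂ (by simpa [h] using h₁)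

end ShiftTraces

namespace IsBlockNilpotent

variable {K Q P : Type*} [Field K] [AddCommGroup Q] [Module K Q] [AddCommGroup P]
  [Module K P] {m : Q →ₗ[K] P →ₗ[K] Matrix (Fin 3) (Fin 3) K}

theorem pow_three (hm : IsBlockNilpotent m) (f : Q) (p : P) : m f p ^ 3 = 0 := hm.pow_card f p

variable [CharZero K]

theorem isStrictUpperTriangular_of_eq_shift (hm : IsBlockNilpotent m) {f₀ : Q} {p₀ : P}
    (h₀ : m f₀ p₀ = shift K)
    (hleft : ∀ f, (m f₀ p₀ * m f₀ p₀ * (m f p₀ * m f p₀)).trace = 0)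
    (hright : ∀ p, (m f₀ p₀ * m f₀ p₀ * (m f₀ p * m f₀ p)).trace = 0) (f : Q) (p : P) :
    IsStrictUpperTriangular (m f p) := by
  have upper_left : IsStrictUpperTriangular (m f p₀) :=
    isStrictUpperTriangular_of_trace_shift_mul (hm.pow_three f p₀)
      (h₀ ▸ hm.trace_mul f₀ f p₀ p₀) (h₀ ▸ hm.trace_mul_self_mul_left f₀ f p₀) (h₀ ▸ hleft f)
  have upper_right : IsStrictUpperTriangular (m f₀ p) :=
    isStrictUpperTriangular_of_trace_shift_mul (hm.pow_three f₀ p)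
      (h₀ ▸ hm.trace_mul f₀ f₀ p₀ p) (h₀ ▸ hm.trace_mul_self_mul_right f₀ p₀ p) (h₀ ▸ hright p)
  have trace_eq := hm.trace_mul f₀ f p₀ p
  have cubic_eq := hm.trace_mul_mul_add f₀ f p₀ p
  have quartic_eq := (hm.trace_quartic f₀ f p p₀).2
  rw [h₀, trace_shift_mul] at trace_eq
  rw [h₀, isStrictUpperTriangular_shift.mul_mul_eq_zero upper_left upper_right, trace_zero,
    zero_add, trace_shift_mul_shift_mul] at cubic_eq
  rw [h₀, upper_right.mul_mul_eq_zero isStrictUpperTriangular_shift upper_left, zero_mul,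
    trace_zero, mul_zero, zero_add, trace_shift_mul_mul_shift_mul, cubic_eq,
    eq_neg_of_add_eq_zero_right trace_eq] at quartic_eq
  have h₁₀ : m f p 1 0 = 0 := by
    refine pow_eq_zero_iff two_ne_zero |>.1 ?_
    linear_combination quartic_eq / 2
  exact isStrictUpperTriangular_of_pow_three_eq_zero (hm.pow_three f p) h₁₀ cubic_eq
    (by simpa [h₁₀] using trace_eq)

theorem exists_conj_isStrictUpperTriangular_of_trace_eq_zero (hm : IsBlockNilpotent m) {f₀ : Q}
    {p₀ : P} (h₀ : m f₀ p₀ * m f₀ p₀ ≠ 0)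
    (hleft : ∀ f, (m f₀ p₀ * m f₀ p₀ * (m f p₀ * m f p₀)).trace = 0)
    (hright : ∀ p, (m f₀ p₀ * m f₀ p₀ * (m f₀ p * m f₀ p)).trace = 0) :
    ∃ u : GL (Fin 3) K, ∀ f p, IsStrictUpperTriangular (conjugateFamily m u f p) := by
  obtain ⟨v, hv⟩ := exists_mulVec_ne_zero h₀
  obtain ⟨u, hu, -⟩ := exists_conj_eq_shift (hm.pow_three f₀ p₀) hv
  exact ⟨u, (hm.conjugate u).isStrictUpperTriangular_of_eq_shift hu
    (fun f => by rw [trace_conjugateFamily_mul_self_mul_mul_self, hleft])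
    (fun p => by rw [trace_conjugateFamily_mul_self_mul_mul_self, hright])⟩

end IsBlockNilpotent

section ShiftPencil

/-- The lower triangular partner of `shift K`: every combination `e • shift K + s • coshift K` is
nilpotent, although the two matrices are not simultaneously triangularizable. -/
def coshift (R : Type*) [Ring R] : Matrix (Fin 3) (Fin 3) R := !![0, 0, 0; 1, 0, 0; 0, -1, 0]

section Traces

variable {R : Type*} [CommRing R] (M : Matrix (Fin 3) (Fin 3) R)

theorem trace_coshift_mul : (coshift R * M).trace = M 0 1 - M 1 2 := by
  simp [coshift, trace_fin_three, vecMul, dotProduct, Fin.sum_univ_three, sub_eq_add_neg]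

theorem trace_coshift_mul_coshift_mul : (coshift R * coshift R * M).trace = -M 0 2 := by
  simp [coshift, trace_fin_three, vecMul, dotProduct, Fin.sum_univ_three]

theorem trace_shift_mul_coshift_mul : (shift R * coshift R * M).trace = M 0 0 - M 1 1 := by
  simp [shift, coshift, trace_fin_three, vecMul, dotProduct, Fin.sum_univ_three, sub_eq_add_neg]

theorem trace_coshift_mul_shift_mul : (coshift R * shift R * M).trace = M 1 1 - M 2 2 := by
  simp [shift, coshift, trace_fin_three, vecMul, dotProduct, Fin.sum_univ_three, sub_eq_add_neg]

theorem trace_shift_mul_mul_coshift : (shift R * M * coshift R).trace = M 1 1 - M 2 2 := by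
  rw [trace_mul_comm, ← mul_assoc, trace_coshift_mul_shift_mul]

theorem trace_coshift_mul_mul_shift : (coshift R * M * shift R).trace = M 0 0 - M 1 1 := by
  rw [trace_mul_comm, ← mul_assoc, trace_shift_mul_coshift_mul]

theorem trace_shift_mul_shift_mul_mul_coshift :
    (shift R * shift R * M * coshift R).trace = M 2 1 := by
  rw [mul_assoc, trace_shift_mul_shift_mul]
  simp [coshift, mul_apply, Fin.sum_univ_three]

theorem trace_coshift_mul_coshift_mul_mul_shift :
    (coshift R * coshift R * M * shift R).trace = -M 0 1 := by
  rw [mul_assoc, trace_coshift_mul_coshift_mul]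
  simp [shift, mul_apply, Fin.sum_univ_three]

theorem trace_shift_mul_shift_mul_coshift_mul_coshift :
    (shift R * shift R * coshift R * coshift R).trace = -1 := by
  rw [trace_shift_mul_shift_mul_mul_coshift]
  simp [coshift]

theorem trace_shift_mul_coshift_mul_shift_mul_coshift :
    (shift R * coshift R * shift R * coshift R).trace = 2 := by
  rw [mul_assoc, trace_shift_mul_coshift_mul]
  norm_num [shift, coshift]

end Traces

theorem exists_mulVec_eq_zero_and_mulVec_ne_zero {K n : Type*} [Field K] [Fintype n]
    [DecidableEq n] {X Y : Matrix n n K} (hY : Y ^ 3 = 0) (h : (X * X * (Y * Y)).trace ≠ 0) :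
    ∃ v, Y *ᵥ v = 0 ∧ (X * X) *ᵥ v ≠ 0 := by
  have hsq : X * X * (Y * Y) * (X * X * (Y * Y)) ≠ 0 := fun h0 =>
    h (trace_eq_zero_of_isNilpotent ⟨2, by rw [pow_two, h0]⟩)
  obtain ⟨z, hz⟩ := exists_mulVec_ne_zero hsq
  refine ⟨(Y * Y * (X * X * (Y * Y))) *ᵥ z, ?_, ?_⟩
  · rw [mulVec_mulVec, ← mul_assoc, ← mul_assoc, show Y * (Y * Y) = Y ^ 3 by noncomm_ring, hY,
      zero_mul, zero_mul, zero_mulVec]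
  · rwa [mulVec_mulVec, ← mul_assoc]

variable {K Q P : Type*} [Field K] [CharZero K] [AddCommGroup Q] [Module K Q] [AddCommGroup P]
  [Module K P] {m : Q →ₗ[K] P →ₗ[K] Matrix (Fin 3) (Fin 3) K}

theorem exists_eq_smul_coshift {M : Matrix (Fin 3) (Fin 3) K} (hM : M ^ 3 = 0)
    (h₁ : (shift K * M).trace = 0) (h₂ : (shift K * shift K * M).trace = 0)
    (h₃ : (M * M * shift K).trace = 0) (h₄ : (shift K * shift K * (M * M)).trace ≠ 0)
    (hcol : ∀ i, M i 2 = 0) : ∃ s : K, s ≠ 0 ∧ M = s • coshift K := by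
  have htrace : M.trace = 0 := trace_eq_zero_of_isNilpotent ⟨3, hM⟩
  have htrace_sq : (M ^ 2).trace = 0 :=
    trace_eq_zero_of_isNilpotent (IsNilpotent.pow_of_pos ⟨3, hM⟩ two_ne_zero)
  rw [trace_shift_mul] at h₁
  rw [trace_shift_mul_shift_mul] at h₂ h₄
  rw [trace_mul_comm, trace_shift_mul] at h₃
  simp only [pow_two, trace_fin_three, mul_apply, Fin.sum_univ_three, hcol, h₂]
    at htrace htrace_sq h₃ h₄
  have hs : M 1 0 ≠ 0 := by grind
  have h₀₀ : M 0 0 = 0 := by grind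
  have h₁₁ : M 1 1 = 0 := by grind
  have h₀₁ : M 0 1 = 0 := by grind
  have h₂₁ : M 2 1 = -M 1 0 := by grind
  refine ⟨M 1 0, hs, ?_⟩
  ext i j
  fin_cases i <;> fin_cases j <;> simp [coshift, h₀₀, h₁₁, h₀₁, h₂₁, hcol, h₂]

namespace IsBlockNilpotent

section Pencil

variable {f₀ f₁ : Q} {p₀ : P}

theorem apply_eq_smul_shift_add (hm : IsBlockNilpotent m) (h₀ : m f₀ p₀ = shift K)
    (h₁ : m f₁ p₀ = coshift K) (p : P) :
    m f₀ p = m f₀ p 0 1 • shift K + m f₀ p 0 2 • single 0 2 1 := by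
  have trace_eq := hm.trace f₀ p
  have trace_sq_eq := hm.trace_mul f₀ f₀ p p
  have h₁₀ := hm.trace_mul f₀ f₀ p₀ p
  have h₁₂ := hm.trace_mul f₁ f₀ p₀ p
  have h₂₀ := hm.trace_mul_self_mul_right f₀ p₀ p
  have h₁₁ := hm.trace_mul_mul f₀ f₁ p₀ p
  have h₂₁ := (hm.trace_quartic f₀ f₁ p₀ p).1
  simp only [h₀, h₁, trace_shift_mul, trace_coshift_mul, trace_shift_mul_shift_mul,
    trace_shift_mul_mul_coshift, trace_shift_mul_shift_mul_mul_coshift] at h₁₀ h₁₂ h₂₀ h₁₁ h₂₁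
  rw [h₂₁, add_zero] at h₁₀
  simp only [trace_fin_three, mul_apply, Fin.sum_univ_three, h₁₀, h₂₀, h₂₁] at trace_eq trace_sq_eq
  generalize m f₀ p = M at *
  have h₂₂ : M 2 2 = 0 := by
    refine pow_eq_zero_iff two_ne_zero |>.1 ?_
    grind
  ext i j
  fin_cases i <;> fin_cases j <;> simp [shift, single] <;> grind

theorem apply_eq_smul_coshift_add (hm : IsBlockNilpotent m) (h₀ : m f₀ p₀ = shift K)
    (h₁ : m f₁ p₀ = coshift K) (p : P) :
    m f₁ p = m f₁ p 1 0 • coshift K + m f₁ p 2 0 • single 2 0 1 := by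
  have trace_eq := hm.trace f₁ p
  have trace_sq_eq := hm.trace_mul f₁ f₁ p p
  have h₂₁ := hm.trace_mul f₀ f₁ p₀ p
  have h₁₂ := hm.trace_mul f₁ f₁ p₀ p
  have h₀₂ := hm.trace_mul_self_mul_right f₁ p₀ p
  have h₁₁ := hm.trace_mul_mul f₁ f₀ p₀ p
  have h₀₁ := (hm.trace_quartic f₁ f₀ p₀ p).1
  simp only [h₀, h₁, trace_shift_mul, trace_coshift_mul, trace_coshift_mul_coshift_mul,
    trace_coshift_mul_mul_shift, trace_coshift_mul_coshift_mul_mul_shift, neg_eq_zero]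
    at h₂₁ h₁₂ h₀₂ h₁₁ h₀₁
  rw [h₀₁, zero_sub, neg_eq_zero] at h₁₂
  simp only [trace_fin_three, mul_apply, Fin.sum_univ_three, h₀₁, h₀₂, h₁₂] at trace_eq trace_sq_eq
  generalize m f₁ p = M at *
  have h₀₀ : M 0 0 = 0 := by
    refine pow_eq_zero_iff two_ne_zero |>.1 ?_
    grind
  ext i j
  fin_cases i <;> fin_cases j <;> simp [coshift, single] <;> grind

theorem apply_eq_smul_of_shift_coshift (hm : IsBlockNilpotent m) (h₀ : m f₀ p₀ = shift K)
    (h₁ : m f₁ p₀ = coshift K) (p : P) :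
    m f₀ p = m f₀ p 0 1 • shift K ∧ m f₁ p = m f₀ p 0 1 • coshift K := by
  have shape₀ := hm.apply_eq_smul_shift_add h₀ h₁ p
  have shape₁ := hm.apply_eq_smul_coshift_add h₀ h₁ p
  have h₂₀ : m f₁ p 2 0 = 0 := by
    have h := hm.trace_mul_mul_add f₀ f₁ p₀ p
    rw [h₀, h₁, trace_shift_mul_coshift_mul, trace_shift_mul_shift_mul, shape₀] at h
    simpa [shift, single] using h
  have h₀₂ : m f₀ p 0 2 = 0 := by
    have h := hm.trace_mul_mul_add f₁ f₀ p₀ p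
    rw [h₀, h₁, trace_coshift_mul_shift_mul, trace_coshift_mul_coshift_mul, shape₁] at h
    simpa [coshift, single] using h
  rw [h₀₂, zero_smul, add_zero] at shape₀
  rw [h₂₀, zero_smul, add_zero] at shape₁
  have quartic₀ := (hm.trace_quartic f₀ f₁ p p₀).2
  have quartic₁ := (hm.trace_quartic f₀ f₁ p₀ p).2
  generalize m f₀ p 0 1 = a, m f₁ p 1 0 = b at *
  simp only [h₀, h₁, shape₀, shape₁, smul_mul_assoc, mul_smul_comm, trace_smul, smul_eq_mul,
    trace_shift_mul_shift_mul_coshift_mul_coshift,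
    trace_shift_mul_coshift_mul_shift_mul_coshift] at quartic₀ quartic₁
  have hab : a = b := by
    refine sub_eq_zero.1 (pow_eq_zero_iff two_ne_zero |>.1 ?_)
    linear_combination (quartic₀ + quartic₁) / 2
  exact ⟨shape₀, hab ▸ shape₁⟩

theorem exists_apply_eq_smul_shift_add_smul_coshift (hm : IsBlockNilpotent m)
    (h₀ : m f₀ p₀ = shift K) (h₁ : m f₁ p₀ = coshift K) (f : Q) :
    ∃ e s : K, m f p₀ = e • shift K + s • coshift K := by
  have trace_eq := hm.trace f p₀
  have trace_sq_eq := hm.trace_mul f f p₀ p₀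
  have h₁₀ := hm.trace_mul f₀ f p₀ p₀
  have h₀₁ := hm.trace_mul f₁ f p₀ p₀
  have h₂₀ := hm.trace_mul_self_mul_left f₀ f p₀
  have h₀₂ := hm.trace_mul_self_mul_left f₁ f p₀
  have hmixed := hm.trace_mul_self_mul_left (f₀ + f₁) f p₀
  simp only [map_add, LinearMap.add_apply, add_mul, mul_add, trace_add, h₀, h₁, trace_shift_mul,
    trace_coshift_mul, trace_shift_mul_shift_mul, trace_coshift_mul_coshift_mul,
    trace_shift_mul_coshift_mul, trace_coshift_mul_shift_mul] at h₁₀ h₀₁ h₂₀ h₀₂ hmixed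
  simp only [trace_fin_three, mul_apply, Fin.sum_univ_three] at trace_eq trace_sq_eq
  generalize m f p₀ = M at *
  refine ⟨M 0 1, M 1 0, ?_⟩
  have h₀₀ : M 0 0 = 0 := by
    refine pow_eq_zero_iff two_ne_zero |>.1 ?_
    grind
  ext i j
  fin_cases i <;> fin_cases j <;> simp [shift, coshift] <;> grind

theorem apply_eq_smul_apply_of_shift_coshift (hm : IsBlockNilpotent m) (h₀ : m f₀ p₀ = shift K)
    (h₁ : m f₁ p₀ = coshift K) (f : Q) (p : P) : m f p = m f₀ p 0 1 • m f p₀ := by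
  obtain ⟨e, s, hf⟩ := hm.exists_apply_eq_smul_shift_add_smul_coshift h₀ h₁ f
  obtain ⟨hp₀, hp₁⟩ := hm.apply_eq_smul_of_shift_coshift h₀ h₁ p
  have h₀' : m (f₀ + (f - e • f₀ - s • f₁)) p₀ = shift K := by
    simp only [map_add, map_sub, map_smul, LinearMap.add_apply, LinearMap.sub_apply,
      LinearMap.smul_apply, h₀, h₁, hf]
    abel
  obtain ⟨hp₀', hp₁'⟩ := hm.apply_eq_smul_of_shift_coshift h₀' h₁ p
  have hcoeff : m (f₀ + (f - e • f₀ - s • f₁)) p 0 1 = m f₀ p 0 1 := by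
    simpa [coshift] using congrFun (congrFun (hp₁'.symm.trans hp₁) 1) 0
  rw [hcoeff] at hp₀'
  generalize m f₀ p 0 1 = a at *
  simp only [map_add, map_sub, map_smul, LinearMap.add_apply, LinearMap.sub_apply,
    LinearMap.smul_apply, hp₀, hp₁] at hp₀'
  rw [hf]
  linear_combination (norm := module) hp₀'

end Pencil

theorem exists_conj_eq_shift_and_coshift (hm : IsBlockNilpotent m) {f₀ f₁ : Q} {p₀ : P}
    (h : (m f₀ p₀ * m f₀ p₀ * (m f₁ p₀ * m f₁ p₀)).trace ≠ 0) :
    ∃ (u : GL (Fin 3) K) (s : K), s ≠ 0 ∧ conjugateFamily m u f₀ p₀ = shift K ∧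
      conjugateFamily m u f₁ p₀ = s • coshift K := by
  obtain ⟨v, hv₁, hv₀⟩ := exists_mulVec_eq_zero_and_mulVec_ne_zero (hm.pow_three f₁ p₀) h
  obtain ⟨u, hu, hcol⟩ := exists_conj_eq_shift (hm.pow_three f₀ p₀) hv₀
  have hm' := hm.conjugate u
  have h₀ : conjugateFamily m u f₀ p₀ = shift K := hu
  have hcol' : ∀ i, conjugateFamily m u f₁ p₀ i 2 = 0 := by
    have hv : ∀ j, (m f₁ p₀ * u⁻¹.val) j 2 = 0 := fun j => by
      simpa only [mul_apply, hcol, mulVec, dotProduct, Pi.zero_apply] using congrFun hv₁ j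
    intro i
    rw [conjugateFamily_apply, mul_assoc, mul_apply]
    simp only [hv, mul_zero, Finset.sum_const_zero]
  obtain ⟨s, hs, h₁⟩ := exists_eq_smul_coshift (hm'.pow_three f₁ p₀)
    (h₀ ▸ hm'.trace_mul f₀ f₁ p₀ p₀) (h₀ ▸ hm'.trace_mul_self_mul_left f₀ f₁ p₀)
    (h₀ ▸ hm'.trace_mul_self_mul_left f₁ f₀ p₀)
    (by rwa [← h₀, trace_conjugateFamily_mul_self_mul_mul_self]) hcol'
  exact ⟨u, s, hs, h₀, h₁⟩

theorem exists_apply_eq_smul_of_trace_ne_zero (hm : IsBlockNilpotent m) {f₀ f₁ : Q} {p₀ : P}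
    (h : (m f₀ p₀ * m f₀ p₀ * (m f₁ p₀ * m f₁ p₀)).trace ≠ 0) :
    ∃ φ : P →ₗ[K] K, ∀ f p, m f p = φ p • m f p₀ := by
  obtain ⟨u, s, hs, h₀, h₁⟩ := hm.exists_conj_eq_shift_and_coshift h
  have h₁' : conjugateFamily m u (s⁻¹ • f₁) p₀ = coshift K := by
    rw [map_smul, LinearMap.smul_apply, h₁, inv_smul_smul₀ hs]
  refine ⟨entryLinearMap K K 0 1 ∘ₗ conjugateFamily m u f₀, fun f p => ?_⟩
  have hconj : u.val * m f p * u⁻¹.val =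
      u.val * (conjugateFamily m u f₀ p 0 1 • m f p₀) * u⁻¹.val := by
    rw [mul_smul_comm, smul_mul_assoc]
    exact (hm.conjugate u).apply_eq_smul_apply_of_shift_coshift h₀ h₁' f p
  exact u.isUnit.mul_left_cancel (u⁻¹.isUnit.mul_right_cancel hconj)

theorem trichotomy (hm : IsBlockNilpotent m) :
    (∃ u : GL (Fin 3) K, ∀ f p, IsStrictUpperTriangular (conjugateFamily m u f p)) ∨
      (∃ (φ : P →ₗ[K] K) (p₀ : P), ∀ f p, m f p = φ p • m f p₀) ∨
      ∃ (ψ : Q →ₗ[K] K) (f₀ : Q), ∀ f p, m f p = ψ f • m f₀ p := by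
  by_cases hsq : ∀ f p, m f p * m f p = 0
  · exact .inl (exists_conj_isStrictUpperTriangular_of_forall_mul_self_eq_zero hsq)
  push Not at hsq
  obtain ⟨f₀, p₀, hne⟩ := hsq
  by_cases hleft : ∀ f, (m f₀ p₀ * m f₀ p₀ * (m f p₀ * m f p₀)).trace = 0
  · by_cases hright : ∀ p, (m f₀ p₀ * m f₀ p₀ * (m f₀ p * m f₀ p)).trace = 0
    · exact .inl (hm.exists_conj_isStrictUpperTriangular_of_trace_eq_zero hne hleft hright)
    · push Not at hright
      obtain ⟨p₁, hp₁⟩ := hright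
      obtain ⟨ψ, hψ⟩ := hm.transpose.exists_apply_eq_smul_of_trace_ne_zero (f₀ := p₀) (f₁ := p₁)
        (p₀ := f₀) (by
          simpa only [transposeFamily_apply, ← transpose_mul, trace_transpose,
            trace_mul_comm (m f₀ p₁ * m f₀ p₁)] using hp₁)
      exact .inr (.inr ⟨ψ, f₀, fun f p => transpose_injective (hψ p f)⟩)
  · push Not at hleft
    obtain ⟨f₁, hf₁⟩ := hleft
    obtain ⟨φ, hφ⟩ := hm.exists_apply_eq_smul_of_trace_ne_zero hf₁
    exact .inr (.inl ⟨φ, p₀, hφ⟩)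

end IsBlockNilpotent

end ShiftPencil

section OperatorMatrices

theorem pow_succ_eq_mul_pow {R : Type*} [Monoid R] {x y : R} (h : x * x = x * y) (k : ℕ) :
    x ^ (k + 1) = x * y ^ k := by
  induction k with
  | zero => rw [zero_add, pow_one, pow_zero, mul_one]
  | succ k ih => rw [pow_succ', ih, ← mul_assoc, h, mul_assoc, ← pow_succ']

theorem pow_succ_eq_pow_mul {R : Type*} [Monoid R] {x y : R} (h : x * x = y * x) (k : ℕ) :
    x ^ (k + 1) = y ^ k * x := by
  induction k with
  | zero => rw [zero_add, pow_one, pow_zero, one_mul]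
  | succ k ih => rw [pow_succ, ih, mul_assoc, h, ← mul_assoc, ← pow_succ]

theorem dotProduct_pow_succ {R n : Type*} [Ring R] [Fintype n] [DecidableEq n] (a c : n → R)
    (k : ℕ) : (a ⬝ᵥ c) ^ (k + 1) = a ⬝ᵥ (vecMulVec c a ^ k *ᵥ c) := by
  induction k with
  | zero => rw [zero_add, pow_one, pow_zero, one_mulVec]
  | succ k ih =>
    rw [pow_succ, ih, pow_succ, ← mulVec_mulVec, vecMulVec_mulVec, mulVec_smul, dotProduct_smul,
      op_smul_eq_mul]

theorem trace_vecMulVec_mul_smul_vecMulVec {R n : Type*} [Ring R] [Fintype n] (a b : n → R)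
    (x : R) :
    (vecMulVec b a * x • vecMulVec b a).trace = ∑ i, b i * (∑ j, a j * x * b j) * a i := by
  simp only [Matrix.trace, diag_apply, mul_apply, Matrix.smul_apply, vecMulVec_apply,
    smul_eq_mul, Finset.mul_sum, Finset.sum_mul, mul_assoc]

variable {K E : Type*} [Field K] [AddCommGroup E] [Module K E]

theorem eq_of_forall_dual_apply_eq {v w : E} (h : ∀ f : Module.Dual K E, f v = f w) : v = w :=
  sub_eq_zero.1 ((Module.forall_dual_apply_eq_zero_iff K _).1 fun f => by
    rw [map_sub, h, sub_self])

theorem sum_apply_eq_zero_of_sum_smulRight_eq_zero {ι : Type*} [Fintype ι]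
    {φ : ι → Module.Dual K E} {u : ι → E} (h : ∑ i, (φ i).smulRight (u i) = 0) :
    ∑ i, φ i (u i) = 0 := by
  let W := Submodule.span K (Set.range u)
  have : FiniteDimensional K W := FiniteDimensional.span_of_finite K (Set.finite_range u)
  let w : ι → W := fun i => ⟨u i, Submodule.subset_span (Set.mem_range_self i)⟩
  have hW : ∑ i, (φ i ∘ₗ W.subtype).smulRight (w i) = 0 := by
    ext e
    simpa [w] using LinearMap.congr_fun h e
  simpa [LinearMap.trace_smulRight, w] using congrArg (LinearMap.trace K W) hW

variable {n : Type*}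

/-- The matrices of scalars `f (B i j p)` obtained by compressing an operator matrix `B` with a
functional `f` and a vector `p`. -/
def evalMatrix (B : Matrix n n (Module.End K E)) :
    Module.Dual K E →ₗ[K] E →ₗ[K] Matrix n n K :=
  LinearMap.mk₂ K (fun f p => B.map fun T => f (T p)) (by intros; ext; simp) (by intros; ext; simp)
    (by intros; ext; simp) (by intros; ext; simp)

theorem evalMatrix_apply (B : Matrix n n (Module.End K E)) (f : Module.Dual K E) (p : E)
    (i j : n) : evalMatrix B f p i j = f (B i j p) := rfl

theorem eq_zero_of_forall_evalMatrix_apply_eq_zero {B : Matrix n n (Module.End K E)} {i j : n}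
    (h : ∀ f p, evalMatrix B f p i j = 0) : B i j = 0 :=
  LinearMap.ext fun p => eq_of_forall_dual_apply_eq (K := K) fun f =>
    (h f p).trans (map_zero f).symm

variable {B : Matrix n n (Module.End K E)}

theorem exists_forall_apply_eq_smul_of_evalMatrix_eq_smul {ψ : Module.Dual K (Module.Dual K E)}
    {f₀ : Module.Dual K E} (h : ∀ f p, evalMatrix B f p = ψ f • evalMatrix B f₀ p) :
    ∃ u, ∀ i j p, B i j p = f₀ (B i j p) • u := by
  have hψ : ∀ f i j p, f (B i j p) = ψ f * f₀ (B i j p) := fun f i j p =>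
    congrFun (congrFun (h f p) i) j
  by_cases hzero : ∀ i j p, f₀ (B i j p) = 0
  · refine ⟨0, fun i j p => eq_of_forall_dual_apply_eq (K := K) fun f => ?_⟩
    rw [hψ, hzero, mul_zero, zero_smul, map_zero]
  · push Not at hzero
    obtain ⟨i₀, j₀, p₀, hne⟩ := hzero
    refine ⟨(f₀ (B i₀ j₀ p₀))⁻¹ • B i₀ j₀ p₀, fun i j p =>
      eq_of_forall_dual_apply_eq (K := K) fun f => ?_⟩
    rw [map_smul, map_smul, smul_eq_mul, smul_eq_mul, hψ f i₀, hψ f i]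
    field_simp

variable [Fintype n]

theorem mul_self_eq_mul_map_of_apply_eq_smul {φ : Module.Dual K E} {p₀ : E}
    (h : ∀ f p, evalMatrix B f p = φ p • evalMatrix B f p₀) :
    B * B = B * (evalMatrix B φ p₀).map (algebraMap K (Module.End K E)) := by
  have hφ : ∀ i j p, B i j p = φ p • B i j p₀ := fun i j p =>
    eq_of_forall_dual_apply_eq (K := K) fun f => by
      simpa [evalMatrix_apply] using congrFun (congrFun (h f p) i) j
  ext i l p
  simp only [mul_apply, map_apply, LinearMap.sum_apply, Module.End.mul_apply,
    Module.algebraMap_end_apply, map_smul, evalMatrix_apply]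
  refine Finset.sum_congr rfl fun j _ => ?_
  rw [hφ j l p, map_smul, hφ i j (B j l p₀), hφ i j p, smul_comm]

theorem mul_self_eq_map_mul_of_apply_eq_smul {f₀ : Module.Dual K E} {u : E}
    (h : ∀ i j p, B i j p = f₀ (B i j p) • u) :
    B * B = (evalMatrix B f₀ u).map (algebraMap K (Module.End K E)) * B := by
  ext i l p
  simp only [mul_apply, map_apply, LinearMap.sum_apply, Module.End.mul_apply,
    Module.algebraMap_end_apply, evalMatrix_apply]
  refine Finset.sum_congr rfl fun j _ => ?_
  conv_lhs => rw [h j l p, map_smul, h i j u]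
  conv_rhs => rw [h j l p]
  rw [smul_comm]

variable [DecidableEq n]

theorem isBlockNilpotent_evalMatrix [IsAlgClosed K]
    (hB : ∀ (x : Module.End K E) (ζ : n → E) (l : K), l ≠ 0 →
      (∀ i, x (∑ j, B i j (ζ j)) = l • ζ i) → ζ = 0) : IsBlockNilpotent (evalMatrix B) := by
  intro f f' p p'
  refine isNilpotent_of_no_nonzero_eigenvalue fun l hl v hv => ?_
  let ζ : n → E := fun j => v (.inl j) • p + v (.inr j) • p'
  have hinl : ∀ i, f (∑ j, B i j (ζ j)) = l * v (.inl i) := fun i => by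
    simpa [ζ, fromBlocks_mulVec, mulVec, dotProduct, evalMatrix_apply, Finset.sum_add_distrib,
      mul_comm] using congrFun hv (.inl i)
  have hinr : ∀ i, f' (∑ j, B i j (ζ j)) = l * v (.inr i) := fun i => by
    simpa [ζ, fromBlocks_mulVec, mulVec, dotProduct, evalMatrix_apply, Finset.sum_add_distrib,
      mul_comm] using congrFun hv (.inr i)
  have hζ : ζ = 0 := hB (f.smulRight p + f'.smulRight p') ζ l hl fun i => by
    rw [LinearMap.add_apply, LinearMap.smulRight_apply, LinearMap.smulRight_apply, hinl, hinr,
      mul_smul, mul_smul, ← smul_add]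
  ext i
  rcases i with i | i
  · simpa [hζ, hl] using (hinl i).symm
  · simpa [hζ, hl] using (hinr i).symm

theorem evalMatrix_conj (B : Matrix n n (Module.End K E)) (u : GL n K) :
    evalMatrix (u.val.map (algebraMap K (Module.End K E)) * B *
      u⁻¹.val.map (algebraMap K (Module.End K E))) = conjugateFamily (evalMatrix B) u := by
  ext f p i j
  simp only [evalMatrix_apply, conjugateFamily_apply, mul_apply, map_apply, Finset.sum_mul,
    LinearMap.sum_apply, Module.End.mul_apply, Module.algebraMap_end_apply, map_sum, map_smul,
    smul_eq_mul]
  exact Finset.sum_congr rfl fun _ _ => Finset.sum_congr rfl fun _ _ => by ring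

namespace IsBlockNilpotent

theorem smul (hB : IsBlockNilpotent (evalMatrix B)) (x : Module.End K E) :
    IsBlockNilpotent (evalMatrix (x • B)) :=
  fun f f' p p' => hB (f ∘ₗ x) (f' ∘ₗ x) p p'

theorem trace_mul_smul_self [CharZero K] (hB : IsBlockNilpotent (evalMatrix B))
    (x : Module.End K E) : (B * x • B).trace = 0 := by
  refine LinearMap.ext fun e => eq_of_forall_dual_apply_eq (K := K) fun f => ?_
  have h : ∑ k : n × n, (f ∘ₗ B k.1 k.2 ∘ₗ x).smulRight (B k.2 k.1 e) = 0 := by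
    refine LinearMap.ext fun p => eq_of_forall_dual_apply_eq (K := K) fun f' => ?_
    simpa [Fintype.sum_prod_type, Matrix.trace, mul_apply, evalMatrix_apply] using
      hB.trace_mul f f' (x p) e
  simpa [Fintype.sum_prod_type, Matrix.trace, mul_apply] using
    sum_apply_eq_zero_of_sum_smulRight_eq_zero h

end IsBlockNilpotent

theorem IsStrictUpperTriangular.pow_three {R : Type*} [Semiring R]
    {M : Matrix (Fin 3) (Fin 3) R} (hM : IsStrictUpperTriangular M) : M ^ 3 = 0 := by
  rw [pow_succ, pow_two, hM.mul_mul_eq_zero hM hM]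

theorem pow_three_eq_zero_of_isStrictUpperTriangular {N : Matrix (Fin 3) (Fin 3) (Module.End K E)}
    {u : GL (Fin 3) K}
    (h : ∀ f p, IsStrictUpperTriangular (conjugateFamily (evalMatrix N) u f p)) : N ^ 3 = 0 := by
  let w := Units.map (algebraMap K (Module.End K E)).mapMatrix.toMonoidHom u
  have hN : IsStrictUpperTriangular (w.val * N * w⁻¹.val) := fun i j hij =>
    eq_zero_of_forall_evalMatrix_apply_eq_zero fun f p => by
      rw [← h f p i j hij, ← evalMatrix_conj]
      rfl
  have hconj := hN.pow_three
  rwa [Units.conj_pow, Units.mul_left_eq_zero, Units.mul_right_eq_zero] at hconj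

theorem IsBlockNilpotent.pow_four_eq_zero [CharZero K]
    {N : Matrix (Fin 3) (Fin 3) (Module.End K E)} (hN : IsBlockNilpotent (evalMatrix N)) :
    N ^ 4 = 0 := by
  have map_pow_three : ∀ f p,
      (evalMatrix N f p).map (algebraMap K (Module.End K E)) ^ 3 = 0 := fun f p => by
    rw [← RingHom.mapMatrix_apply, ← map_pow, hN.pow_three, map_zero]
  rcases hN.trichotomy with ⟨u, hu⟩ | ⟨φ, p₀, hφ⟩ | ⟨ψ, f₀, hψ⟩
  · rw [pow_succ, pow_three_eq_zero_of_isStrictUpperTriangular hu, zero_mul]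
  · rw [pow_succ_eq_mul_pow (mul_self_eq_mul_map_of_apply_eq_smul hφ), map_pow_three, mul_zero]
  · obtain ⟨u, hu⟩ := exists_forall_apply_eq_smul_of_evalMatrix_eq_smul hψ
    rw [pow_succ_eq_pow_mul (mul_self_eq_map_mul_of_apply_eq_smul hu), map_pow_three, zero_mul]

theorem IsBlockNilpotent.sum_mul_sum_mul_eq_zero [CharZero K] {a b : n → Module.End K E}
    (h : IsBlockNilpotent (evalMatrix (vecMulVec b a))) (x : Module.End K E) :
    ∑ i, b i * (∑ j, a j * x * b j) * a i = 0 := by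
  rw [← trace_vecMulVec_mul_smul_vecMulVec, h.trace_mul_smul_self]

theorem IsBlockNilpotent.sum_mul_mul_pow_five_eq_zero [CharZero K]
    {a b : Fin 3 → Module.End K E} (h : IsBlockNilpotent (evalMatrix (vecMulVec b a)))
    (x : Module.End K E) : (∑ i, a i * x * b i) ^ 5 = 0 := by
  have hdot : ∑ i, a i * x * b i = a ⬝ᵥ (x • b) := by simp [dotProduct, mul_assoc]
  rw [hdot, dotProduct_pow_succ, smul_vecMulVec, (h.smul x).pow_four_eq_zero, zero_mulVec,
    dotProduct_zero]

end OperatorMatrices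

section SimpleQuotients

theorem continuous_end_quotient {A : Type*} [Ring A] [TopologicalSpace A] [IsTopologicalRing A]
    (I : Ideal A) (ψ : Module.End A (A ⧸ I)) : Continuous ψ := by
  obtain ⟨d, hd⟩ := Submodule.Quotient.mk_surjective I (ψ (Submodule.Quotient.mk 1))
  have hψ : ψ ∘ I.mkQ = fun x => I.mkQ (x * d) := funext fun x => by
    have hx : I.mkQ x = x • I.mkQ 1 := by rw [← map_smul, smul_eq_mul, mul_one]
    simp only [Function.comp_apply, hx, map_smul]
    rw [← smul_eq_mul, map_smul]
    exact congrArg (x • ·) hd.symm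
  rw [I.isOpenQuotientMap_mkQ.isQuotientMap.continuous_iff, hψ]
  exact I.isOpenQuotientMap_mkQ.continuous.comp (continuous_mul_const d)

theorem eq_zero_of_smul_eq_smul_of_spectralRadius_eq_zero {𝕜 A E : Type*} [NormedField 𝕜] [Ring A]
    [Algebra 𝕜 A] [AddCommGroup E] [Module 𝕜 E] [Module A E] [IsScalarTower 𝕜 A E] {x : A}
    (hx : spectralRadius 𝕜 x = 0) {l : 𝕜} (hl : l ≠ 0) {e : E} (he : x • e = l • e) : e = 0 := by
  have hmem : l ∈ resolventSet 𝕜 x :=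
    spectrum.mem_resolventSet_of_spectralRadius_lt (by simpa [hx] using hl)
  refine (spectrum.mem_resolventSet_iff.1 hmem).smul_eq_zero.1 ?_
  rw [sub_smul, algebraMap_smul, he, sub_self]

theorem mem_jacobsonRadical_iff {A : Type*} [Ring A] {z : A} :
    z ∈ jacobsonRadical A ↔ ∀ I : Ideal A, I.IsMaximal → z ∈ I := by
  simp only [jacobsonRadical, Ideal.jacobson, Submodule.mem_sInf, Set.mem_ofPred_eq, bot_le,
    true_and]

variable {A : Type*} [NormedRing A] [NormedAlgebra ℂ A] [CompleteSpace A] (I : Ideal A)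
  [I.IsMaximal]

theorem exists_end_quotient_eq_smul (ψ : Module.End A (A ⧸ I)) : ∃ l : ℂ, ∀ e, ψ e = l • e := by
  have : IsSimpleModule A (A ⧸ I) := isSimpleModule_iff_isCoatom.2 Ideal.IsMaximal.out
  have : Nontrivial (A ⧸ I) := IsSimpleModule.nontrivial A _
  let Ψ : (A ⧸ I) →L[ℂ] (A ⧸ I) := ⟨ψ.restrictScalars ℂ, continuous_end_quotient I ψ⟩
  obtain ⟨l, hl⟩ := spectrum.nonempty Ψ
  let L : Module.End A (A ⧸ I) := l • 1
  refine ⟨l, fun e => ?_⟩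
  rcases LinearMap.bijective_or_eq_zero (L - ψ) with hbij | hzero
  · exact absurd (ContinuousLinearMap.isUnit_iff_bijective.2 hbij) hl
  · exact (sub_eq_zero.1 (LinearMap.congr_fun hzero e)).symm

theorem exists_smul_eq_apply (φ : Module.End ℂ (A ⧸ I)) (s : Finset (A ⧸ I)) :
    ∃ x : A, ∀ e ∈ s, x • e = φ e := by
  have : IsSimpleModule A (A ⧸ I) := isSimpleModule_iff_isCoatom.2 Ideal.IsMaximal.out
  let φ' : Module.End (Module.End A (A ⧸ I)) (A ⧸ I) :=
    { toFun := φ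
      map_add' := φ.map_add
      map_smul' := fun ψ e => by
        obtain ⟨l, hl⟩ := exists_end_quotient_eq_smul I ψ
        simp [hl] }
  obtain ⟨x, hx⟩ := jacobson_density φ' s
  exact ⟨x, fun e he => (hx e he).symm⟩

theorem mem_of_lsmul_quotient_eq_zero {A : Type*} [Ring A] [Algebra ℂ A] {I : Ideal A} {z : A}
    (hz : Algebra.lsmul ℂ ℂ (A ⧸ I) z = 0) : z ∈ I := by
  have h : z • (Submodule.Quotient.mk 1 : A ⧸ I) = 0 := LinearMap.congr_fun hz _
  rwa [← Submodule.Quotient.mk_smul, Submodule.Quotient.mk_eq_zero, smul_eq_mul, mul_one] at h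

variable {n : Type*} [Fintype n] [DecidableEq n] {a b : n → A}

theorem isBlockNilpotent_evalMatrix_lsmul_quotient
    (hS : ∀ x, spectralRadius ℂ (∑ i, a i * x * b i) = 0) :
    IsBlockNilpotent (evalMatrix (vecMulVec (fun i => Algebra.lsmul ℂ ℂ (A ⧸ I) (b i))
      fun j => Algebra.lsmul ℂ ℂ (A ⧸ I) (a j))) := by
  classical
  refine isBlockNilpotent_evalMatrix fun φ ζ l hl hφ => ?_
  let y : A ⧸ I := ∑ j, a j • ζ j
  have hy : ∀ i, φ (b i • y) = l • ζ i := fun i => by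
    simpa [y, vecMulVec_apply, Finset.smul_sum] using hφ i
  obtain ⟨x, hx⟩ := exists_smul_eq_apply I φ (Finset.univ.image fun i => b i • y)
  have hxy : ∀ i, x • b i • y = l • ζ i := fun i =>
    (hx _ (Finset.mem_image_of_mem _ (Finset.mem_univ i))).trans (hy i)
  have hy_zero : y = 0 := by
    refine eq_zero_of_smul_eq_smul_of_spectralRadius_eq_zero (hS x) hl ?_
    calc (∑ i, a i * x * b i) • y = ∑ i, a i • l • ζ i := by
          simp only [Finset.sum_smul, mul_smul, hxy]
      _ = l • y := by simp only [y, Finset.smul_sum, smul_comm l]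
  refine funext fun i => (smul_eq_zero_iff_right hl).1 ?_
  rw [← hy, hy_zero, smul_zero, map_zero]

end SimpleQuotients

theorem sum_mul_sum_mul_mem_jacobsonRadical {A n : Type*} [NormedRing A] [NormedAlgebra ℂ A]
    [CompleteSpace A] [Fintype n] {a b : n → A}
    (hS : ∀ x, spectralRadius ℂ (∑ i, a i * x * b i) = 0) (x : A) :
    ∑ i, b i * (∑ j, a j * x * b j) * a i ∈ jacobsonRadical A := by
  classical
  refine mem_jacobsonRadical_iff.2 fun I _ => mem_of_lsmul_quotient_eq_zero ?_
  simpa only [map_sum, map_mul] using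
    (isBlockNilpotent_evalMatrix_lsmul_quotient I hS).sum_mul_sum_mul_eq_zero
      (Algebra.lsmul ℂ ℂ (A ⧸ I) x)

theorem spectrally_infinitesimal_length_three_elementary_operator_general
    {A : Type*} [NormedRing A] [NormedAlgebra ℂ A] [CompleteSpace A]
    (a b : Fin 3 → A) (hS : ∀ x : A, spectralRadius ℂ (∑ i, a i * x * b i) = 0) :
    (∀ x : A, ∑ i, b i * (∑ j, a j * x * b j) * a i ∈ jacobsonRadical A) ∧
    (∀ x : A, (∑ i, a i * x * b i) ^ 5 ∈ jacobsonRadical A) := by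
  refine ⟨sum_mul_sum_mul_mem_jacobsonRadical hS, fun x => mem_jacobsonRadical_iff.2 fun I _ =>
    mem_of_lsmul_quotient_eq_zero ?_⟩
  simpa only [map_sum, map_mul, map_pow] using
    (isBlockNilpotent_evalMatrix_lsmul_quotient I hS).sum_mul_mul_pow_five_eq_zero
      (Algebra.lsmul ℂ ℂ (A ⧸ I) x)

/-- **Proposition 4.1.** Let `A` be a unital complex Banach algebra and let
`S = Σ_{i=1}^3 M_{a_i,b_i}` be an elementary operator on `A` of length `3` such
that `r(Sx) = 0` for every `x ∈ A`.  Then `S*(S(x)) ∈ rad A` for every `x ∈ A`,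
and `(Sx)⁵ ∈ rad A` for every `x ∈ A`, where `S* = Σ_{i=1}^3 M_{b_i,a_i}`. -/
theorem spectrally_infinitesimal_length_three_elementary_operator
    {A : Type*} [NormedRing A] [NormedAlgebra ℂ A] [CompleteSpace A]
    (a b : Fin 3 → A)
    (hSlen : ∀ (m : ℕ) (c d : Fin m → A),
      (∀ x : A, ∑ i, a i * x * b i = ∑ i, c i * x * d i) → 3 ≤ m)
    (hS : ∀ x : A, spectralRadius ℂ (∑ i, a i * x * b i) = 0) :
    (∀ x : A, ∑ i, b i * (∑ j, a j * x * b j) * a i ∈ jacobsonRadical A) ∧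
    (∀ x : A, (∑ i, a i * x * b i) ^ 5 ∈ jacobsonRadical A) := by
  exact spectrally_infinitesimal_length_three_elementary_operator_general a b hS
end

section
/- Let E be a complex Banach space and let A be a closed subalgebra of B(E) acting irreducibly on E (i.e. {aζ : a ∈ A} = E for every nonzero ζ ∈ E). Let S : A → B(E) be the elementary operator Sx = Σ_{i=1}^3 u_i x v_i with u_i, v_i ∈ B(E), of length 3, and suppose that one of the following holds: (i) there exist λ ∈ ℂ, ζ₀, ζ₁ ∈ E and f ∈ E* such that v_1u_1 = v_2u_2 = v_3u_3 = λI, v_1u_2 = ζ₁⊗f, v_1u_3 = 0, v_2u_1 = ζ₀⊗f, v_2u_3 = ζ₁⊗f, v_3u_1 = 0 and v_3u_2 = −ζ₀⊗f; or (ii) there exist λ ∈ ℂ, ζ₀ ∈ E and f, g ∈ E* such that v_1u_1 = v_2u_2 = v_3u_3 = λI, v_1u_2 = ζ₀⊗g, v_1u_3 = 0, v_2u_1 = ζ₀⊗f, v_2u_3 = ζ₀⊗g, v_3u_1 = 0 and v_3u_2 = −ζ₀⊗f. Then S is spectrally bounded, i.e. there is a constant M ≥ 0 with r(Sx) ≤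 M·r(x) for all x ∈ A, where r denotes the spectral radius in B(E). -/
open scoped ENNReal NNReal

/-!
For `μ ≠ 0` the spectrum of `∑ uᵢ x vᵢ`, a row times a column, can be read off the product in the
opposite order, the operator matrix `x • (vᵢ uⱼ)`.  In both cases `(vᵢ uⱼ) = λ + K`, where `K` has
rank-one entries sharing a functional or a vector.  For every operator `y` the square of `y • K` is
then `y • K` times a scalar matrix whose cube is zero, so `y • K` is nilpotent.  Taking
`y = (μ - λ x)⁻¹ x`, the factorization `μ - x • (λ + K) = (μ - λ x) • (1 - y • K)` shows that each
nonzero spectral value of `∑ uᵢ x vᵢ` is one of `λ x`.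
-/

open Matrix

section Spectrum

variable {𝕜 R m n : Type*} [Ring R] [Fintype m] [Fintype n] [DecidableEq m] [DecidableEq n]

theorem isUnit_one_sub_matrix_mul_swap {A : Matrix m n R} {B : Matrix n m R}
    (h : IsUnit (1 - B * A)) : IsUnit (1 - A * B) := by
  obtain ⟨⟨_, C, hBAC, hCBA⟩, rfl⟩ := h
  refine ⟨⟨1 - A * B, 1 + A * C * B, ?_, ?_⟩, rfl⟩
  · calc (1 - A * B) * (1 + A * C * B)
        = 1 - A * B + A * ((1 - B * A) * C) * B := by
          simp only [Matrix.sub_mul, Matrix.mul_sub, Matrix.mul_add, Matrix.mul_assoc,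
            Matrix.one_mul, Matrix.mul_one]
      _ = 1 := by rw [hBAC, Matrix.mul_one, sub_add_cancel]
  · calc (1 + A * C * B) * (1 - A * B)
        = 1 - A * B + A * (C * (1 - B * A)) * B := by
          simp only [Matrix.sub_mul, Matrix.mul_sub, Matrix.add_mul, Matrix.mul_assoc,
            Matrix.one_mul, Matrix.mul_one]
          abel
      _ = 1 := by rw [hCBA, Matrix.mul_one, sub_add_cancel]

theorem spectrum_matrix_mul_swap_diff_zero_subset [Field 𝕜] [Algebra 𝕜 R]
    (A : Matrix m n R) (B : Matrix n m R) :
    spectrum 𝕜 (A * B) \ {0} ⊆ spectrum 𝕜 (B * A) := by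
  rintro μ ⟨hμ, hμ0 : μ ≠ 0⟩ hunit
  lift μ to 𝕜ˣ using hμ0.isUnit
  refine hμ ?_
  rw [spectrum.mem_resolventSet_iff] at hunit ⊢
  simp only [Algebra.algebraMap_eq_smul_one, ← Units.smul_def,
    IsUnit.smul_sub_iff_sub_inv_smul] at hunit ⊢
  rw [← Matrix.smul_mul]
  apply isUnit_one_sub_matrix_mul_swap
  rwa [Matrix.mul_smul]

theorem spectrum_dotProduct_diff_zero_subset [Field 𝕜] [Algebra 𝕜 R] (a b : n → R) :
    spectrum 𝕜 (a ⬝ᵥ b) \ {0} ⊆ spectrum 𝕜 (vecMulVec b a) := by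
  have hab : uniqueAlgEquiv (R := 𝕜) (replicateRow Unit a * replicateCol Unit b) = a ⬝ᵥ b :=
    replicateRow_mul_replicateCol_apply a b _ _
  rw [← hab, AlgEquiv.spectrum_eq, vecMulVec_eq Unit]
  exact spectrum_matrix_mul_swap_diff_zero_subset _ _

theorem spectrum_smul_smul_one_add_subset [CommRing 𝕜] [Algebra 𝕜 R] {K : Matrix n n R}
    (hK : ∀ y : R, IsNilpotent (y • K)) (c : 𝕜) (x : R) :
    spectrum 𝕜 (x • (c • (1 : Matrix n n R) + K)) ⊆ spectrum 𝕜 (c • x) := by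
  rintro μ hμ ⟨z, hz⟩
  refine hμ ?_
  have hfactor : algebraMap 𝕜 (Matrix n n R) μ - x • (c • (1 : Matrix n n R) + K)
      = scalar n (z : R) * (1 - ((↑z⁻¹ : R) * x) • K) := by
    rw [scalar_apply, ← smul_eq_diagonal_mul, smul_sub, smul_smul, Units.mul_inv_cancel_left, hz,
      sub_smul, smul_add, algebraMap_smul, smul_comm x c (1 : Matrix n n R), smul_assoc c x,
      Algebra.algebraMap_eq_smul_one, sub_sub]
  rw [spectrum.mem_resolventSet_iff, hfactor]
  exact (z.isUnit.map (scalar n)).mul (hK _).isUnit_one_sub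

theorem spectrum_sum_mul_mul_diff_zero_subset [Field 𝕜] [Algebra 𝕜 R] {u v : n → R} {c : 𝕜}
    {K : Matrix n n R} (huv : vecMulVec v u = c • (1 : Matrix n n R) + K)
    (hK : ∀ y : R, IsNilpotent (y • K)) (x : R) :
    spectrum 𝕜 (∑ i, u i * x * v i) \ {0} ⊆ spectrum 𝕜 (c • x) := by
  have hsum : ∑ i, u i * x * v i = u ⬝ᵥ (x • v) := by
    simp only [dotProduct, Pi.smul_apply, smul_eq_mul, mul_assoc]
  calc spectrum 𝕜 (∑ i, u i * x * v i) \ {0}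
      ⊆ spectrum 𝕜 (vecMulVec (x • v) u) := hsum ▸ spectrum_dotProduct_diff_zero_subset u (x • v)
    _ = spectrum 𝕜 (x • (c • (1 : Matrix n n R) + K)) := by rw [smul_vecMulVec, huv]
    _ ⊆ spectrum 𝕜 (c • x) := spectrum_smul_smul_one_add_subset hK c x

end Spectrum

section SpectralRadius

variable {𝕜 R : Type*} [NormedField 𝕜] [Ring R] [Algebra 𝕜 R]

theorem spectralRadius_smul (c : 𝕜) (a : R) :
    spectralRadius 𝕜 (c • a) = ‖c‖₊ * spectralRadius 𝕜 a := by
  rcases eq_or_ne c 0 with rfl | hc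
  · simp
  lift c to 𝕜ˣ using hc.isUnit
  simp only [spectralRadius, ← Units.smul_def, spectrum.unit_smul_eq_smul, ← Set.image_smul,
    iSup_image, ENNReal.mul_iSup]
  simp only [Units.smul_def, smul_eq_mul, nnnorm_mul, ENNReal.coe_mul]

theorem spectralRadius_le_of_spectrum_diff_zero_subset {S : Type*} [Ring S] [Algebra 𝕜 S]
    {a : R} {b : S} (h : spectrum 𝕜 a \ {0} ⊆ spectrum 𝕜 b) :
    spectralRadius 𝕜 a ≤ spectralRadius 𝕜 b := by
  refine iSup₂_le fun μ hμ => ?_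
  rcases eq_or_ne μ 0 with rfl | hμ0
  · simp
  · exact le_iSup₂_of_le μ (h ⟨hμ, hμ0⟩) le_rfl

theorem spectralRadius_sum_mul_mul_le {n : Type*} [Fintype n] [DecidableEq n] {u v : n → R}
    {c : 𝕜} {K : Matrix n n R} (huv : vecMulVec v u = c • (1 : Matrix n n R) + K)
    (hK : ∀ y : R, IsNilpotent (y • K)) (x : R) :
    spectralRadius 𝕜 (∑ i, u i * x * v i) ≤ ‖c‖₊ * spectralRadius 𝕜 x :=
  (spectralRadius_le_of_spectrum_diff_zero_subset
    (spectrum_sum_mul_mul_diff_zero_subset huv hK x)).trans_eq (spectralRadius_smul c x)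

end SpectralRadius

section Nilpotent

theorem isNilpotent_of_mul_self_eq_mul_right {M : Type*} [MonoidWithZero M] {a t : M}
    (h : a * a = a * t) (ht : IsNilpotent t) : IsNilpotent a := by
  obtain ⟨k, hk⟩ := ht
  have hsemiconj : SemiconjBy a t a := h.symm
  exact ⟨k + 1, by rw [pow_succ, ← (hsemiconj.pow_right k).eq, hk, mul_zero]⟩

theorem isNilpotent_of_mul_self_eq_mul_left {M : Type*} [MonoidWithZero M] {a t : M}
    (h : a * a = t * a) (ht : IsNilpotent t) : IsNilpotent a := by
  obtain ⟨k, hk⟩ := ht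
  have hsemiconj : SemiconjBy a a t := h
  exact ⟨k + 1, by rw [pow_succ', (hsemiconj.pow_right k).eq, hk, zero_mul]⟩

/-- The tridiagonal pattern of the off-diagonal products `vᵢ uⱼ` in both special forms, with
superdiagonal `p, p` and subdiagonal `q, -q`; the sign makes its cube vanish over a commutative
ring.  Entries may be scalars, vectors, functionals or operators. -/
def alternatingTridiagonal {α : Type*} [Zero α] [Neg α] (p q : α) : Matrix (Fin 3) (Fin 3) α :=
  !![0, p, 0; q, 0, p; 0, -q, 0]

theorem map_alternatingTridiagonal {α β : Type*} [Zero α] [Neg α] [Zero β] [Neg β] (φ : α → β)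
    (p q : α) (h0 : φ 0 = 0) (hneg : φ (-q) = -φ q) :
    (alternatingTridiagonal p q).map φ = alternatingTridiagonal (φ p) (φ q) := by
  ext i j
  fin_cases i <;> fin_cases j <;> simp [alternatingTridiagonal, h0, hneg]

theorem isNilpotent_alternatingTridiagonal {R : Type*} [CommRing R] (p q : R) :
    IsNilpotent (alternatingTridiagonal p q) := by
  refine ⟨3, ?_⟩
  ext i j
  fin_cases i <;> fin_cases j <;>
    simp [alternatingTridiagonal, pow_succ, Matrix.mul_apply, Fin.sum_univ_three] <;> ring

variable {𝕜 E n : Type*} [CommRing 𝕜] [TopologicalSpace 𝕜] [AddCommGroup E] [Module 𝕜 E]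
  [TopologicalSpace E] [IsTopologicalAddGroup E] [ContinuousSMul 𝕜 E] [Fintype n]
  [DecidableEq n]

theorem isNilpotent_map_smulRight_of_map_apply {f : E →L[𝕜] 𝕜} {Z : Matrix n n E}
    (hZ : IsNilpotent (Z.map f)) : IsNilpotent (Z.map fun ζ => f.smulRight ζ) := by
  refine isNilpotent_of_mul_self_eq_mul_right
    (t := (algebraMap 𝕜 (E →L[𝕜] E)).mapMatrix (Z.map f)) ?_ (hZ.map _)
  ext i j e
  simp [Matrix.mul_apply, smul_smul, mul_comm, Algebra.algebraMap_eq_smul_one]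

theorem isNilpotent_map_smulRight_const_of_map_apply {F : Matrix n n (E →L[𝕜] 𝕜)} {ζ : E}
    (hF : IsNilpotent (F.map fun f => f ζ)) :
    IsNilpotent (F.map fun f => f.smulRight ζ) := by
  refine isNilpotent_of_mul_self_eq_mul_left
    (t := (algebraMap 𝕜 (E →L[𝕜] E)).mapMatrix (F.map fun f => f ζ)) ?_ (hF.map _)
  ext i j e
  simp [Matrix.mul_apply, smul_smul, mul_comm, Algebra.algebraMap_eq_smul_one]

theorem isNilpotent_smul_alternatingTridiagonal_smulRight (f : E →L[𝕜] 𝕜) (ζ₁ ζ₀ : E)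
    (y : E →L[𝕜] E) :
    IsNilpotent (y • alternatingTridiagonal (f.smulRight ζ₁) (f.smulRight ζ₀)) := by
  have hmap : y • alternatingTridiagonal (f.smulRight ζ₁) (f.smulRight ζ₀) =
      (alternatingTridiagonal (y ζ₁) (y ζ₀)).map fun ζ => f.smulRight ζ := by
    ext i j e
    fin_cases i <;> fin_cases j <;> simp [alternatingTridiagonal]
  rw [hmap]
  apply isNilpotent_map_smulRight_of_map_apply
  rw [map_alternatingTridiagonal f _ _ (map_zero f) (map_neg f _)]
  exact isNilpotent_alternatingTridiagonal _ _

theorem isNilpotent_smul_alternatingTridiagonal_smulRight_const [IsTopologicalAddGroup 𝕜]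
    (g f : E →L[𝕜] 𝕜) (ζ : E) (y : E →L[𝕜] E) :
    IsNilpotent (y • alternatingTridiagonal (g.smulRight ζ) (f.smulRight ζ)) := by
  have hmap : y • alternatingTridiagonal (g.smulRight ζ) (f.smulRight ζ) =
      (alternatingTridiagonal g f).map fun φ => φ.smulRight (y ζ) := by
    ext i j e
    fin_cases i <;> fin_cases j <;> simp [alternatingTridiagonal]
  rw [hmap]
  apply isNilpotent_map_smulRight_const_of_map_apply
  rw [map_alternatingTridiagonal (fun φ : E →L[𝕜] 𝕜 => φ (y ζ)) _ _ rfl rfl]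
  exact isNilpotent_alternatingTridiagonal _ _

end Nilpotent

theorem special_length_three_elementary_operator_spectrally_bounded_general
    {𝕜 E : Type*} [NormedField 𝕜] [AddCommGroup E] [Module 𝕜 E] [TopologicalSpace E]
    [IsTopologicalAddGroup E] [ContinuousSMul 𝕜 E] (u v : Fin 3 → (E →L[𝕜] E))
    (hcase :
      (∃ (lam : 𝕜) (ζ₀ ζ₁ : E) (f : E →L[𝕜] 𝕜),
        v 0 * u 0 = lam • (1 : E →L[𝕜] E) ∧
        v 1 * u 1 = lam • (1 : E →L[𝕜] E) ∧
        v 2 * u 2 = lam • (1 : E →L[𝕜] E) ∧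
        v 0 * u 1 = f.smulRight ζ₁ ∧
        v 0 * u 2 = 0 ∧
        v 1 * u 0 = f.smulRight ζ₀ ∧
        v 1 * u 2 = f.smulRight ζ₁ ∧
        v 2 * u 0 = 0 ∧
        v 2 * u 1 = -(f.smulRight ζ₀)) ∨
      (∃ (lam : 𝕜) (ζ₀ : E) (f g : E →L[𝕜] 𝕜),
        v 0 * u 0 = lam • (1 : E →L[𝕜] E) ∧
        v 1 * u 1 = lam • (1 : E →L[𝕜] E) ∧
        v 2 * u 2 = lam • (1 : E →L[𝕜] E) ∧
        v 0 * u 1 = g.smulRight ζ₀ ∧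
        v 0 * u 2 = 0 ∧
        v 1 * u 0 = f.smulRight ζ₀ ∧
        v 1 * u 2 = g.smulRight ζ₀ ∧
        v 2 * u 0 = 0 ∧
        v 2 * u 1 = -(f.smulRight ζ₀))) :
    ∃ M : ℝ≥0, ∀ x : E →L[𝕜] E,
      spectralRadius 𝕜 (∑ i, u i * x * v i) ≤ (M : ℝ≥0∞) * spectralRadius 𝕜 x := by
  rcases hcase with ⟨lam, ζ₀, ζ₁, f, h00, h11, h22, h01, h02, h10, h12, h20, h21⟩ |
    ⟨lam, ζ₀, f, g, h00, h11, h22, h01, h02, h10, h12, h20, h21⟩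
  · have huv : vecMulVec v u = lam • (1 : Matrix (Fin 3) (Fin 3) (E →L[𝕜] E)) +
        alternatingTridiagonal (f.smulRight ζ₁) (f.smulRight ζ₀) := by
      ext1 i j
      fin_cases i <;> fin_cases j <;> simp [vecMulVec_apply, alternatingTridiagonal, *]
    exact ⟨‖lam‖₊, spectralRadius_sum_mul_mul_le huv
      (isNilpotent_smul_alternatingTridiagonal_smulRight f ζ₁ ζ₀)⟩
  · have huv : vecMulVec v u = lam • (1 : Matrix (Fin 3) (Fin 3) (E →L[𝕜] E)) +
        alternatingTridiagonal (g.smulRight ζ₀) (f.smulRight ζ₀) := by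
      ext1 i j
      fin_cases i <;> fin_cases j <;> simp [vecMulVec_apply, alternatingTridiagonal, *]
    exact ⟨‖lam‖₊, spectralRadius_sum_mul_mul_le huv
      (isNilpotent_smul_alternatingTridiagonal_smulRight_const g f ζ₀)⟩

/-- **Lemma 4.2.** Let `E` be a complex Banach space and let `A` be a closed
irreducible subalgebra of `B(E)`.  Let `Sx = Σ_{i=1}^3 u_i x v_i`, with
`u_i, v_i ∈ B(E)`, be an elementary operator of length `3` on `A` whose
coefficient products `(v_i u_j)` have one of the two special forms (i), (ii)
below.  Then `S` is spectrally bounded, the spectral radius being computed in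
`B(E)`. -/
theorem special_length_three_elementary_operator_spectrally_bounded
    {E : Type*} [NormedAddCommGroup E] [NormedSpace ℂ E] [CompleteSpace E]
    (A : Subalgebra ℂ (E →L[ℂ] E)) (hA : IsClosed (A : Set (E →L[ℂ] E)))
    (hirr : ∀ ζ : E, ζ ≠ 0 → ∀ η : E, ∃ a ∈ A, a ζ = η)
    (u v : Fin 3 → (E →L[ℂ] E))
    (hlen : ∀ (m : ℕ) (u' v' : Fin m → (E →L[ℂ] E)),
      (∀ x ∈ A, ∑ i, u i * x * v i = ∑ i, u' i * x * v' i) → 3 ≤ m)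
    (hcase :
      (∃ (lam : ℂ) (ζ₀ ζ₁ : E) (f : E →L[ℂ] ℂ),
        v 0 * u 0 = lam • (1 : E →L[ℂ] E) ∧
        v 1 * u 1 = lam • (1 : E →L[ℂ] E) ∧
        v 2 * u 2 = lam • (1 : E →L[ℂ] E) ∧
        v 0 * u 1 = f.smulRight ζ₁ ∧
        v 0 * u 2 = 0 ∧
        v 1 * u 0 = f.smulRight ζ₀ ∧
        v 1 * u 2 = f.smulRight ζ₁ ∧
        v 2 * u 0 = 0 ∧
        v 2 * u 1 = -(f.smulRight ζ₀)) ∨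
      (∃ (lam : ℂ) (ζ₀ : E) (f g : E →L[ℂ] ℂ),
        v 0 * u 0 = lam • (1 : E →L[ℂ] E) ∧
        v 1 * u 1 = lam • (1 : E →L[ℂ] E) ∧
        v 2 * u 2 = lam • (1 : E →L[ℂ] E) ∧
        v 0 * u 1 = g.smulRight ζ₀ ∧
        v 0 * u 2 = 0 ∧
        v 1 * u 0 = f.smulRight ζ₀ ∧
        v 1 * u 2 = g.smulRight ζ₀ ∧
        v 2 * u 0 = 0 ∧
        v 2 * u 1 = -(f.smulRight ζ₀))) :
    ∃ M : ℝ≥0, ∀ x ∈ A,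
      spectralRadius ℂ (∑ i, u i * x * v i) ≤ (M : ℝ≥0∞) * spectralRadius ℂ x := by
  obtain ⟨M, hM⟩ :=
    special_length_three_elementary_operator_spectrally_bounded_general u v hcase
  exact ⟨M, fun x _ => hM x⟩
end
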